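/- Let k ≥ 2 be a fixed integer and let ε > 0. There is a constant C = C(k, ε) > 0 such that for every real δ > 0 and every integer N ≥ 1, the number of quadruples (n₁, n₂, n₃, n₄) of integers with N < n₁, n₂, n₃, n₄ ≤ 2N and |n₁^{1/k} + n₂^{1/k} − n₃^{1/k} − n₄^{1/k}| < δ N^{1/k} is at most C · N^{ε}(N⁴δ + N²). -/

import Mathlib

open Real

/-!
A counting bound with loss `N ^ κ` for the dual exponent `α / (α - 1)` implies one with loss
`N ^ (κ / (1 + κ))` for `α`; as duality is an involution of the exponents other than `0` and `1`,
iterating from the trivial loss `N ^ 2` makes the loss arbitrarily small.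

For one step, the count for `α` at `δ = 1 / T` is dominated by the average over `[0, T]` of the
fourth power of the smooth exponential sum with phase `y (n / N) ^ α`. On each geometric block
substitute `y = Y z ^ (1 - α)` with `z ∈ [1, 2]`. Poisson summation and stationary phase turn the
sum into a dual sum of about `Y / N` terms with phase `z Y (1 - α) (m / M) ^ (α / (α - 1))`, up to
slowly varying amplitudes of size `Y ^ (-1 / 2)`. This phase is linear in `z`, so the fourth moment
over `z` is again controlled by the count, now for the dual exponent.
-/

/-! ### Oscillatory integrals -/

/-- The unimodular exponential `exp (i t)`, for real `t`. -/
noncomputable def osc (t : ℝ) : ℂ := Complex.exp (t * Complex.I)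

lemma norm_osc (t : ℝ) : ‖osc t‖ = 1 := Complex.norm_exp_ofReal_mul_I t

lemma osc_add (s t : ℝ) : osc (s + t) = osc s * osc t := by
  simp only [osc, Complex.ofReal_add, add_mul, Complex.exp_add]

lemma conj_osc (t : ℝ) : (starRingEnd ℂ) (osc t) = osc (-t) := by
  simp [osc, ← Complex.exp_conj]

lemma contDiff_osc {n : WithTop ℕ∞} : ContDiff ℝ n osc :=
  (Complex.ofRealCLM.contDiff.mul contDiff_const).cexp

@[fun_prop] lemma continuous_osc : Continuous osc := contDiff_osc (n := 0).continuous

lemma hasDerivAt_osc_comp {f : ℝ → ℝ} {f' x : ℝ} (hf : HasDerivAt f f' x) :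
    HasDerivAt (fun y => osc (f y)) (f' * Complex.I * osc (f x)) x := by
  simpa only [osc, mul_comm] using (hf.ofReal_comp.mul_const Complex.I).cexp

lemma integral_inv_one_add_mul_sq_le {d : ℝ} (hd : 0 < d) (a b σ : ℝ) :
    ∫ s in a..b, (1 + d * (s - σ) ^ 2)⁻¹ ≤ π / √d := by
  have hrescale (s : ℝ) :
      (1 + d * (s - σ) ^ 2)⁻¹ = (fun y : ℝ => (1 + y ^ 2)⁻¹) (√d * s - √d * σ) := by
    simp only [← mul_sub, mul_pow, Real.sq_sqrt hd.le]
  simp_rw [hrescale]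
  rw [intervalIntegral.integral_comp_mul_sub (fun y : ℝ => (1 + y ^ 2)⁻¹) (Real.sqrt_pos.2 hd).ne',
    integral_inv_one_add_sq, smul_eq_mul, div_eq_inv_mul]
  gcongr
  linarith [Real.arctan_lt_pi_div_two (√d * b - √d * σ),
    Real.neg_pi_div_two_lt_arctan (√d * a - √d * σ)]

/-- The factor `1 + i (s - σ) h(s)` by which `exp (i H)`, where `H' = h`, is multiplied when
`(s - σ) exp (i H)` is differentiated. Unlike `h`, it does not vanish at the stationary point `σ`,
so that one can divide by it before integrating by parts. -/
noncomputable def stationaryFactor (h : ℝ → ℝ) (σ s : ℝ) : ℂ :=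
  1 + ((s - σ) * h s : ℝ) * Complex.I

section SecondDerivativeTest

variable {h h' φ φ' : ℝ → ℝ} {a b σ : ℝ}

lemma sq_norm_stationaryFactor (h : ℝ → ℝ) (σ s : ℝ) :
    ‖stationaryFactor h σ s‖ ^ 2 = 1 + ((s - σ) * h s) ^ 2 := by
  rw [← Complex.normSq_eq_norm_sq, stationaryFactor, ← Complex.ofReal_one,
    Complex.normSq_add_mul_I, one_pow]

lemma stationaryFactor_ne_zero (h : ℝ → ℝ) (σ s : ℝ) : stationaryFactor h σ s ≠ 0 := by
  have hpos : 0 < ‖stationaryFactor h σ s‖ ^ 2 := by rw [sq_norm_stationaryFactor]; positivity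
  exact norm_ne_zero_iff.1 (pow_ne_zero_iff two_ne_zero |>.1 hpos.ne')

lemma half_one_add_le_norm_stationaryFactor {s x : ℝ} (hx : x ≤ |(s - σ) * h s|) :
    (1 + x) / 2 ≤ ‖stationaryFactor h σ s‖ := by
  have hsq := sq_norm_stationaryFactor h σ s
  have hone : 1 ≤ ‖stationaryFactor h σ s‖ := by
    nlinarith [sq_nonneg ((s - σ) * h s), norm_nonneg (stationaryFactor h σ s)]
  have habs : |(s - σ) * h s| ≤ ‖stationaryFactor h σ s‖ :=
    abs_le_of_sq_le_sq (by rw [hsq]; linarith) (norm_nonneg _)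
  linarith

lemma hasDerivAt_stationaryFactor {s : ℝ} (hh : HasDerivAt h (h' s) s) :
    HasDerivAt (stationaryFactor h σ) ((h s + (s - σ) * h' s : ℝ) * Complex.I) s := by
  have hprod := ((((hasDerivAt_id s).sub_const σ).mul hh).ofReal_comp.mul_const Complex.I).const_add
    (1 : ℂ)
  simp only [id_eq, one_mul] at hprod
  exact hprod

lemma integral_mul_osc_eq_neg_integral_stationaryFactor {H : ℝ → ℝ}
    (hH : ∀ s, HasDerivAt H (h s) s) (hh : ∀ s, HasDerivAt h (h' s) s) (hh' : Continuous h')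
    (hφ : ∀ s, HasDerivAt φ (φ' s) s) (hφ' : Continuous φ') (ha : φ a = 0) (hb : φ b = 0) :
    ∫ s in a..b, (φ s : ℂ) * osc (H s) =
      -∫ s in a..b, (φ' s * stationaryFactor h σ s -
        φ s * ((h s + (s - σ) * h' s : ℝ) * Complex.I)) / stationaryFactor h σ s ^ 2 *
        ((s - σ : ℝ) * osc (H s)) := by
  have hφc : Continuous φ := continuous_iff_continuousAt.2 fun s => (hφ s).continuousAt
  have hhc : Continuous h := continuous_iff_continuousAt.2 fun s => (hh s).continuousAt
  have hHc : Continuous H := continuous_iff_continuousAt.2 fun s => (hH s).continuousAt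
  have hPc : Continuous (stationaryFactor h σ) := by unfold stationaryFactor; fun_prop
  have hPne := stationaryFactor_ne_zero h σ
  have hE (s : ℝ) : HasDerivAt (fun s => ((s - σ : ℝ) : ℂ) * osc (H s))
      (stationaryFactor h σ s * osc (H s)) s := by
    refine ((((hasDerivAt_id s).sub_const σ).ofReal_comp).mul
      (hasDerivAt_osc_comp (hH s))).congr_deriv ?_
    simp only [stationaryFactor, id_eq, Complex.ofReal_one, Complex.ofReal_mul]
    ring
  have hparts := intervalIntegral.integral_mul_deriv_eq_deriv_mul (a := a) (b := b)
    (fun s _ => ((hφ s).ofReal_comp).div (hasDerivAt_stationaryFactor (hh s)) (hPne s))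
    (fun s _ => hE s)
    (Continuous.intervalIntegrable (Continuous.div (by fun_prop) (by fun_prop)
      fun s => pow_ne_zero 2 (hPne s)) _ _)
    (Continuous.intervalIntegrable (by fun_prop) _ _)
  simp only [Pi.div_apply, ha, hb, Complex.ofReal_zero, zero_div, zero_mul,
    sub_self, zero_sub] at hparts
  rw [← hparts]
  refine intervalIntegral.integral_congr fun s _ => ?_
  field_simp [hPne s]

lemma norm_div_sq_mul_le {K l B φ φ' y : ℝ} {P P' : ℂ} (hl : 0 < l) (hB : 0 ≤ B)
    (hφ : |φ| ≤ K) (hφ' : |φ'| ≤ K) (hP : (1 + l * y ^ 2) / 2 ≤ ‖P‖)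
    (hP' : ‖P'‖ ≤ 2 * (B * l) * |y|) :
    ‖(φ' * P - φ * P') / P ^ 2 * y‖ ≤ K / √l + 8 * K * B * (1 + l * y ^ 2)⁻¹ := by
  have hK : 0 ≤ K := (abs_nonneg _).trans hφ
  have hQ : 0 < 1 + l * y ^ 2 := by positivity
  have hPpos : 0 < ‖P‖ := by linarith
  have hnum : ‖φ' * P - φ * P'‖ ≤ K * ‖P‖ + K * (2 * (B * l) * |y|) := by
    refine (norm_sub_le _ _).trans ?_
    rw [norm_mul, norm_mul, Complex.norm_real, Complex.norm_real, Real.norm_eq_abs,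
      Real.norm_eq_abs]
    gcongr
  have hmain : |y| / ‖P‖ ≤ 1 / √l := by
    have hamgm : 2 * (√l * |y|) ≤ 1 + l * y ^ 2 := by
      nlinarith [sq_nonneg (√l * |y| - 1), Real.sq_sqrt hl.le, sq_abs y]
    rw [div_le_div_iff₀ hPpos (Real.sqrt_pos.2 hl)]
    linarith
  have hrest : B * l * y ^ 2 / ‖P‖ ^ 2 ≤ 4 * (B * (1 + l * y ^ 2)⁻¹) := by
    calc B * l * y ^ 2 / ‖P‖ ^ 2 ≤ B * l * y ^ 2 / ((1 + l * y ^ 2) / 2) ^ 2 := by gcongr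
      _ = 4 * (B * (1 + l * y ^ 2)⁻¹ * (l * y ^ 2 / (1 + l * y ^ 2))) := by field_simp; ring
      _ ≤ 4 * (B * (1 + l * y ^ 2)⁻¹ * 1) := by
        gcongr
        exact div_le_one_of_le₀ (by linarith) hQ.le
      _ = 4 * (B * (1 + l * y ^ 2)⁻¹) := by rw [mul_one]
  calc ‖(φ' * P - φ * P') / P ^ 2 * y‖
      = ‖φ' * P - φ * P'‖ / ‖P‖ ^ 2 * |y| := by
        simp only [norm_mul, norm_div, norm_pow, Complex.norm_real, Real.norm_eq_abs]
    _ ≤ (K * ‖P‖ + K * (2 * (B * l) * |y|)) / ‖P‖ ^ 2 * |y| := by gcongr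
    _ = K * (|y| / ‖P‖) + 2 * K * (B * l * y ^ 2 / ‖P‖ ^ 2) := by
        rw [← sq_abs y]; field_simp
    _ ≤ K * (1 / √l) + 2 * K * (4 * (B * (1 + l * y ^ 2)⁻¹)) := by gcongr
    _ = _ := by ring

lemma norm_add_mul_mul_I_le {D x y y' : ℝ} (hy : |y| ≤ D * |x|) (hy' : |y'| ≤ D) :
    ‖((y + x * y' : ℝ) : ℂ) * Complex.I‖ ≤ 2 * D * |x| := by
  rw [norm_mul, Complex.norm_I, mul_one, Complex.norm_real, Real.norm_eq_abs]
  calc |y + x * y'| ≤ |y| + |x| * |y'| := by rw [← abs_mul]; exact abs_add_le _ _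
    _ ≤ D * |x| + |x| * D := by gcongr
    _ = 2 * D * |x| := by ring

lemma norm_integral_mul_osc_le_of_stationary {H : ℝ → ℝ} {l B K : ℝ} (hab : a ≤ b) (hl : 0 < l)
    (hH : ∀ s, HasDerivAt H (h s) s) (hh : ∀ s, HasDerivAt h (h' s) s) (hh' : Continuous h')
    (hφ : ∀ s, HasDerivAt φ (φ' s) s) (hφ' : Continuous φ') (ha : φ a = 0) (hb : φ b = 0)
    (hK : ∀ s ∈ Set.Icc a b, |φ s| ≤ K) (hK' : ∀ s ∈ Set.Icc a b, |φ' s| ≤ K)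
    (hlow : ∀ s ∈ Set.Icc a b, l * (s - σ) ^ 2 ≤ |(s - σ) * h s|)
    (hup : ∀ s ∈ Set.Icc a b, |h s| ≤ B * l * |s - σ|)
    (hup' : ∀ s ∈ Set.Icc a b, |h' s| ≤ B * l) :
    ‖∫ s in a..b, (φ s : ℂ) * osc (H s)‖ ≤ K * (b - a + 8 * B * π) / √l := by
  have hB : 0 ≤ B :=
    nonneg_of_mul_nonneg_left ((abs_nonneg _).trans (hup' a (Set.left_mem_Icc.2 hab))) hl
  have hK0 : 0 ≤ K := (abs_nonneg _).trans (hK a (Set.left_mem_Icc.2 hab))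
  have hcont : Continuous fun s : ℝ => (1 + l * (s - σ) ^ 2)⁻¹ :=
    Continuous.inv₀ (by fun_prop) fun s => by positivity
  rw [integral_mul_osc_eq_neg_integral_stationaryFactor hH hh hh' hφ hφ' ha hb (σ := σ), norm_neg]
  calc ‖∫ s in a..b, _‖
      ≤ ∫ s in a..b, (K / √l + 8 * K * B * (1 + l * (s - σ) ^ 2)⁻¹) := by
        refine intervalIntegral.norm_integral_le_of_norm_le hab
          (Filter.Eventually.of_forall fun s hs => ?_)
          (Continuous.intervalIntegrable (by fun_prop) _ _)
        have hs' := Set.Ioc_subset_Icc_self hs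
        rw [← mul_assoc, norm_mul, norm_osc, mul_one]
        exact norm_div_sq_mul_le hl hB (hK s hs') (hK' s hs')
          (half_one_add_le_norm_stationaryFactor (hlow s hs'))
          (norm_add_mul_mul_I_le (hup s hs') (hup' s hs'))
    _ = (b - a) * (K / √l) + 8 * K * B * ∫ s in a..b, (1 + l * (s - σ) ^ 2)⁻¹ := by
        rw [intervalIntegral.integral_add (Continuous.intervalIntegrable (by fun_prop) _ _)
          (Continuous.intervalIntegrable (by fun_prop) _ _), intervalIntegral.integral_const,
          intervalIntegral.integral_const_mul, smul_eq_mul]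
    _ ≤ (b - a) * (K / √l) + 8 * K * B * (π / √l) := by
        gcongr
        exact integral_inv_one_add_mul_sq_le hl _ _ _
    _ = K * (b - a + 8 * B * π) / √l := by ring

end SecondDerivativeTest

section Nonstationary

variable {f f₁ f₂ g g₁ g₂ Γ : ℝ → ℝ} {a b : ℝ}

lemma integral_mul_deriv_mul_osc {v v' : ℝ → ℝ} (hab : a ≤ b) (hΓ : ∀ s, HasDerivAt Γ (g s) s)
    (hg : Continuous g) (hv : ∀ s ∈ Set.Icc a b, HasDerivAt v (v' s) s)
    (hv' : ContinuousOn v' (Set.Icc a b)) (ha : v a = 0) (hb : v b = 0) :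
    ∫ s in a..b, ((v s * g s : ℝ) : ℂ) * osc (Γ s) =
      Complex.I * ∫ s in a..b, (v' s : ℂ) * osc (Γ s) := by
  have hΓc : Continuous Γ := continuous_iff_continuousAt.2 fun s => (hΓ s).continuousAt
  have hparts := intervalIntegral.integral_mul_deriv_eq_deriv_mul (a := a) (b := b)
    (fun s hs => (hv s (Set.uIcc_of_le hab ▸ hs)).ofReal_comp)
    (fun s _ => hasDerivAt_osc_comp (hΓ s))
    (ContinuousOn.intervalIntegrable (by rw [Set.uIcc_of_le hab]; fun_prop))
    (Continuous.intervalIntegrable (by fun_prop) _ _)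
  rw [ha, hb, Complex.ofReal_zero, zero_mul, zero_mul, sub_zero, zero_sub] at hparts
  rw [← neg_eq_iff_eq_neg.2 hparts, mul_neg, ← neg_mul, ← intervalIntegral.integral_const_mul]
  refine intervalIntegral.integral_congr fun s _ => ?_
  push_cast
  linear_combination ((v s : ℂ) * g s * osc (Γ s)) * Complex.I_sq

/-- `((f / g)' / g)'`, where `f₁, f₂` and `g₁, g₂` stand for the derivatives of `f` and `g`. -/
noncomputable def iteratedQuotientDeriv (f f₁ f₂ g g₁ g₂ : ℝ → ℝ) (s : ℝ) : ℝ :=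
  f₂ s / g s ^ 2 - 3 * f₁ s * g₁ s / g s ^ 3 - f s * g₂ s / g s ^ 3 + 3 * f s * g₁ s ^ 2 / g s ^ 4

lemma integral_mul_osc_eq_neg_integral_iteratedQuotientDeriv (hab : a ≤ b)
    (hf : ∀ s, HasDerivAt f (f₁ s) s) (hf₁ : ∀ s, HasDerivAt f₁ (f₂ s) s) (hf₂ : Continuous f₂)
    (hΓ : ∀ s, HasDerivAt Γ (g s) s) (hg : ∀ s, HasDerivAt g (g₁ s) s)
    (hg₁ : ∀ s, HasDerivAt g₁ (g₂ s) s) (hg₂ : Continuous g₂) (hg0 : ∀ s ∈ Set.Icc a b, g s ≠ 0)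
    (ha : f a = 0) (hb : f b = 0) (ha₁ : f₁ a = 0) (hb₁ : f₁ b = 0) :
    ∫ s in a..b, (f s : ℂ) * osc (Γ s) =
      -∫ s in a..b, (iteratedQuotientDeriv f f₁ f₂ g g₁ g₂ s : ℂ) * osc (Γ s) := by
  have hfc : Continuous f := continuous_iff_continuousAt.2 fun s => (hf s).continuousAt
  have hf₁c : Continuous f₁ := continuous_iff_continuousAt.2 fun s => (hf₁ s).continuousAt
  have hgc : Continuous g := continuous_iff_continuousAt.2 fun s => (hg s).continuousAt
  have hg₁c : Continuous g₁ := continuous_iff_continuousAt.2 fun s => (hg₁ s).continuousAt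
  have hdivc {h : ℝ → ℝ} (hh : Continuous h) (n : ℕ) :
      ContinuousOn (fun s => h s / g s ^ n) (Set.Icc a b) :=
    hh.continuousOn.div (by fun_prop) fun s hs => pow_ne_zero _ (hg0 s hs)
  set q : ℝ → ℝ := fun s => (f₁ s * g s - f s * g₁ s) / g s ^ 2 with hq
  have hdiv : ∀ s ∈ Set.Icc a b, HasDerivAt (fun s => f s / g s) (q s) s :=
    fun s hs => (hf s).div (hg s) (hg0 s hs)
  have hdiv₂ : ∀ s ∈ Set.Icc a b,
      HasDerivAt (fun s => q s / g s) (iteratedQuotientDeriv f f₁ f₂ g g₁ g₂ s) s := by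
    intro s hs
    have hgs := hg0 s hs
    refine (((((hf₁ s).mul (hg s)).sub ((hf s).mul (hg₁ s))).div ((hg s).pow 2)
      (pow_ne_zero 2 hgs)).div (hg s) hgs).congr_deriv ?_
    simp only [iteratedQuotientDeriv, Pi.pow_apply, Pi.mul_apply, Pi.sub_apply, Pi.div_apply]
    field_simp
    push_cast
    ring
  have hcancel {h : ℝ → ℝ} : ∫ s in a..b, (h s : ℂ) * osc (Γ s) =
      ∫ s in a..b, ((h s / g s * g s : ℝ) : ℂ) * osc (Γ s) :=
    intervalIntegral.integral_congr fun s hs => by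
      simp only [div_mul_cancel₀ _ (hg0 s (Set.uIcc_of_le hab ▸ hs))]
  rw [hcancel, integral_mul_deriv_mul_osc hab hΓ hgc hdiv (hdivc (by fun_prop) 2)
      (by rw [ha, zero_div]) (by rw [hb, zero_div]),
    hcancel, integral_mul_deriv_mul_osc hab hΓ hgc hdiv₂
      ((((hdivc hf₂ 2).sub (hdivc (by fun_prop) 3)).sub (hdivc (by fun_prop) 3)).add
        (hdivc (by fun_prop) 4)) (by simp [hq, ha, ha₁]) (by simp [hq, hb, hb₁]),
    ← mul_assoc, Complex.I_mul_I, neg_one_mul]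

lemma abs_iteratedQuotientDeriv_le {K L s : ℝ} (hg : g s ≠ 0) (hf : |f s| ≤ K) (hf₁ : |f₁ s| ≤ K)
    (hf₂ : |f₂ s| ≤ K) (hg₁ : |g₁ s| ≤ L * |g s|) (hg₂ : |g₂ s| ≤ L * |g s|) :
    |iteratedQuotientDeriv f f₁ f₂ g g₁ g₂ s| ≤ K * (1 + 4 * L + 3 * L ^ 2) / g s ^ 2 := by
  have hK : 0 ≤ K := (abs_nonneg _).trans hf
  have hterm₁ : |f₂ s / g s ^ 2| ≤ K / |g s| ^ 2 := by
    rw [abs_div, abs_pow]; gcongr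
  have hterm₂ : |3 * f₁ s * g₁ s / g s ^ 3| ≤ 3 * K * L / |g s| ^ 2 := by
    rw [abs_div, abs_pow, abs_mul, abs_mul, abs_of_pos (by norm_num : (0 : ℝ) < 3)]
    calc 3 * |f₁ s| * |g₁ s| / |g s| ^ 3 ≤ 3 * K * (L * |g s|) / |g s| ^ 3 := by gcongr
      _ = _ := by field_simp
  have hterm₃ : |f s * g₂ s / g s ^ 3| ≤ K * L / |g s| ^ 2 := by
    rw [abs_div, abs_pow, abs_mul]
    calc |f s| * |g₂ s| / |g s| ^ 3 ≤ K * (L * |g s|) / |g s| ^ 3 := by gcongr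
      _ = _ := by field_simp
  have hterm₄ : |3 * f s * g₁ s ^ 2 / g s ^ 4| ≤ 3 * K * L ^ 2 / |g s| ^ 2 := by
    rw [abs_div, abs_pow, abs_mul, abs_mul, abs_of_pos (by norm_num : (0 : ℝ) < 3), abs_pow]
    calc 3 * |f s| * |g₁ s| ^ 2 / |g s| ^ 4 ≤ 3 * K * (L * |g s|) ^ 2 / |g s| ^ 4 := by gcongr
      _ = _ := by field_simp
  calc |iteratedQuotientDeriv f f₁ f₂ g g₁ g₂ s|
      ≤ K / |g s| ^ 2 + 3 * K * L / |g s| ^ 2 + K * L / |g s| ^ 2 + 3 * K * L ^ 2 / |g s| ^ 2 :=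
        (abs_add_le _ _).trans (add_le_add ((abs_sub _ _).trans
          (add_le_add ((abs_sub _ _).trans (add_le_add hterm₁ hterm₂)) hterm₃)) hterm₄)
    _ = K * (1 + 4 * L + 3 * L ^ 2) / |g s| ^ 2 := by ring
    _ = K * (1 + 4 * L + 3 * L ^ 2) / g s ^ 2 := by rw [sq_abs]

lemma norm_integral_mul_osc_le_of_nonstationary {B K L : ℝ} (hab : a ≤ b) (hB : 0 < B)
    (hL : 0 ≤ L) (hf : ∀ s, HasDerivAt f (f₁ s) s) (hf₁ : ∀ s, HasDerivAt f₁ (f₂ s) s)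
    (hf₂ : Continuous f₂) (hΓ : ∀ s, HasDerivAt Γ (g s) s)
    (hg : ∀ s, HasDerivAt g (g₁ s) s) (hg₁ : ∀ s, HasDerivAt g₁ (g₂ s) s) (hg₂ : Continuous g₂)
    (hfK : ∀ s ∈ Set.Icc a b, |f s| ≤ K) (hfK₁ : ∀ s ∈ Set.Icc a b, |f₁ s| ≤ K)
    (hfK₂ : ∀ s ∈ Set.Icc a b, |f₂ s| ≤ K) (hgB : ∀ s ∈ Set.Icc a b, B ≤ |g s|)
    (hgL₁ : ∀ s ∈ Set.Icc a b, |g₁ s| ≤ L * B) (hgL₂ : ∀ s ∈ Set.Icc a b, |g₂ s| ≤ L * B)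
    (ha : f a = 0) (hb : f b = 0) (ha₁ : f₁ a = 0) (hb₁ : f₁ b = 0) :
    ‖∫ s in a..b, (f s : ℂ) * osc (Γ s)‖ ≤ (b - a) * (K * (1 + 4 * L + 3 * L ^ 2)) / B ^ 2 := by
  have hK : 0 ≤ K := (abs_nonneg _).trans (hfK a (Set.left_mem_Icc.2 hab))
  have hg0 : ∀ s ∈ Set.Icc a b, g s ≠ 0 := fun s hs => abs_pos.1 (hB.trans_le (hgB s hs))
  rw [integral_mul_osc_eq_neg_integral_iteratedQuotientDeriv hab hf hf₁ hf₂ hΓ hg hg₁ hg₂ hg0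
    ha hb ha₁ hb₁, norm_neg]
  calc ‖∫ s in a..b, (iteratedQuotientDeriv f f₁ f₂ g g₁ g₂ s : ℂ) * osc (Γ s)‖
      ≤ K * (1 + 4 * L + 3 * L ^ 2) / B ^ 2 * |b - a| := by
        refine intervalIntegral.norm_integral_le_of_norm_le_const fun s hs => ?_
        have hs' : s ∈ Set.Icc a b := Set.Ioc_subset_Icc_self (Set.uIoc_of_le hab ▸ hs)
        have hLB : L * B ≤ L * |g s| := by gcongr; exact hgB s hs'
        rw [norm_mul, norm_osc, mul_one, Complex.norm_real, Real.norm_eq_abs]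
        refine (abs_iteratedQuotientDeriv_le (hg0 s hs') (hfK s hs') (hfK₁ s hs') (hfK₂ s hs')
          ((hgL₁ s hs').trans hLB) ((hgL₂ s hs').trans hLB)).trans ?_
        rw [← sq_abs (g s)]
        gcongr
        exact hgB s hs'
    _ = _ := by rw [abs_of_nonneg (sub_nonneg.2 hab)]; ring

end Nonstationary

/-! ### The model phase -/

lemma analyticOnNhd_dslope {f : ℝ → ℝ} (hf : AnalyticOnNhd ℝ f Set.univ) (x₀ : ℝ) :
    AnalyticOnNhd ℝ (dslope f x₀) Set.univ := by
  intro x _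
  rcases eq_or_ne x x₀ with rfl | hx
  · obtain ⟨p, hp⟩ := hf x trivial
    exact ⟨_, hp.has_fpower_series_dslope_fslope⟩
  · have hslope : AnalyticAt ℝ (slope f x₀) x :=
      ((analyticAt_id.sub analyticAt_const).inv (sub_ne_zero.2 hx)).mul
        ((hf x trivial).sub analyticAt_const)
    exact hslope.congr (dslope_eventuallyEq_slope_of_ne f hx).symm

lemma eq_mul_dslope_zero {f : ℝ → ℝ} (hf : f 0 = 0) (s : ℝ) : f s = s * dslope f 0 s := by
  simpa [hf] using (sub_smul_dslope f 0 s).symm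

/-- The phase `exp (α s) - α exp s`, normalised to vanish at its critical point `0`. -/
noncomputable def modelPhase (α s : ℝ) : ℝ := exp (α * s) - α * exp s - (1 - α)

/-- The derivative of `modelPhase α`. -/
noncomputable def modelPhaseDeriv (α s : ℝ) : ℝ := α * (exp (α * s) - exp s)

section ModelPhase

variable {α : ℝ}

lemma hasDerivAt_modelPhase (α s : ℝ) : HasDerivAt (modelPhase α) (modelPhaseDeriv α s) s := by
  refine (((((hasDerivAt_id s).const_mul α).exp).sub
    ((hasDerivAt_exp s).const_mul α)).sub_const (1 - α)).congr_deriv ?_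
  simp only [modelPhaseDeriv, id_eq]
  ring

lemma hasDerivAt_modelPhaseDeriv (α s : ℝ) :
    HasDerivAt (modelPhaseDeriv α) (α * (α * exp (α * s) - exp s)) s := by
  refine (((((hasDerivAt_id s).const_mul α).exp).sub (hasDerivAt_exp s)).const_mul α).congr_deriv ?_
  simp only [id_eq]
  ring

@[fun_prop] lemma continuous_modelPhase (α : ℝ) : Continuous (modelPhase α) := by
  unfold modelPhase; fun_prop

@[fun_prop] lemma continuous_modelPhaseDeriv (α : ℝ) : Continuous (modelPhaseDeriv α) := by
  unfold modelPhaseDeriv; fun_prop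

lemma analyticOnNhd_modelPhase (α : ℝ) : AnalyticOnNhd ℝ (modelPhase α) Set.univ := by
  intro x _; unfold modelPhase; fun_prop

lemma analyticOnNhd_modelPhaseDeriv (α : ℝ) : AnalyticOnNhd ℝ (modelPhaseDeriv α) Set.univ := by
  intro x _; unfold modelPhaseDeriv; fun_prop

lemma modelPhaseDeriv_zero (α : ℝ) : modelPhaseDeriv α 0 = 0 := by simp [modelPhaseDeriv]

lemma dslope_modelPhaseDeriv_ne_zero (hα0 : α ≠ 0) (hα1 : α ≠ 1) (s : ℝ) :
    dslope (modelPhaseDeriv α) 0 s ≠ 0 := by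
  intro hs
  rcases eq_or_ne s 0 with rfl | h0
  · rw [dslope_same, (hasDerivAt_modelPhaseDeriv α 0).deriv] at hs
    simp [hα0, sub_eq_zero, hα1] at hs
  · have hexp := eq_mul_dslope_zero (modelPhaseDeriv_zero α) s
    rw [hs, mul_zero, modelPhaseDeriv, mul_eq_zero, or_iff_right hα0, sub_eq_zero, exp_eq_exp]
      at hexp
    exact hα1 (mul_right_cancel₀ h0 (hexp.trans (one_mul s).symm))

lemma exists_modelPhase_eq_mul_deriv (hα0 : α ≠ 0) (hα1 : α ≠ 1) :
    ∃ q : ℝ → ℝ, ContDiff ℝ 2 q ∧ ∀ s, modelPhase α s = q s * modelPhaseDeriv α s := by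
  set k := dslope (modelPhaseDeriv α) 0
  set f₁ := dslope (modelPhase α) 0 with hf₁
  have hf₁0 : f₁ 0 = 0 := by
    rw [hf₁, dslope_same, (hasDerivAt_modelPhase α 0).deriv, modelPhaseDeriv_zero]
  have hk0 := dslope_modelPhaseDeriv_ne_zero hα0 hα1
  refine ⟨fun s => s * dslope f₁ 0 s / k s, contDiff_iff_contDiffAt.2 fun s => ?_, fun s => ?_⟩
  · exact ((analyticAt_id.mul
      (analyticOnNhd_dslope (analyticOnNhd_dslope (analyticOnNhd_modelPhase α) 0) 0 s trivial)).div
      (analyticOnNhd_dslope (analyticOnNhd_modelPhaseDeriv α) 0 s trivial) (hk0 s)).contDiffAt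
  · rw [eq_mul_dslope_zero (f := modelPhase α) (by simp [modelPhase]), ← hf₁,
      eq_mul_dslope_zero hf₁0, eq_mul_dslope_zero (modelPhaseDeriv_zero α)]
    change _ = s * dslope f₁ 0 s / k s * (s * k s)
    field_simp [show k s ≠ 0 from hk0 s]

lemma exists_modelPhase_bounds (hα0 : α ≠ 0) (hα1 : α ≠ 1) (R : ℝ) :
    ∃ c B : ℝ, 0 < c ∧ 0 ≤ B ∧ ∀ s ∈ Set.Icc (-R) R, c * s ^ 2 ≤ |s * modelPhaseDeriv α s| ∧
      |modelPhaseDeriv α s| ≤ B * c * |s| ∧ |α * (α * exp (α * s) - exp s)| ≤ B * c := by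
  set k := dslope (modelPhaseDeriv α) 0
  have hk : Continuous k := continuous_iff_continuousAt.2 fun s =>
    (analyticOnNhd_dslope (analyticOnNhd_modelPhaseDeriv α) 0 s trivial).continuousAt
  have hk0 : ∀ s, k s ≠ 0 := dslope_modelPhaseDeriv_ne_zero hα0 hα1
  obtain ⟨A, hA⟩ := (isCompact_Icc (a := -R) (b := R)).exists_bound_of_continuousOn
    (f := fun s => (k s)⁻¹) (hk.inv₀ hk0).continuousOn
  obtain ⟨D, hD⟩ := (isCompact_Icc (a := -R) (b := R)).exists_bound_of_continuousOn
    (f := fun s => |k s| + |α * (α * exp (α * s) - exp s)|) (by fun_prop)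
  refine ⟨(|A| + 1)⁻¹, |D| * (|A| + 1), by positivity, by positivity, fun s hs => ?_⟩
  rw [mul_inv_cancel_right₀ (by positivity), eq_mul_dslope_zero (modelPhaseDeriv_zero α) s,
    ← mul_assoc s, ← sq, abs_mul, abs_mul s, abs_of_nonneg (sq_nonneg s), mul_comm _ (s ^ 2),
    mul_comm |D|]
  have hDs := (hD s hs).trans (le_abs_self D)
  rw [Real.norm_of_nonneg (by positivity)] at hDs
  have hAs : |k s|⁻¹ ≤ |A| + 1 := by
    rw [← abs_inv]
    linarith [(hA s hs).trans (le_abs_self A), Real.norm_eq_abs (k s)⁻¹]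
  refine ⟨?_, ?_, ?_⟩
  · gcongr
    exact (inv_le_comm₀ (abs_pos.2 (hk0 s)) (by positivity)).1 hAs
  · refine mul_le_mul_of_nonneg_left ?_ (abs_nonneg s)
    linarith [abs_nonneg (α * (α * exp (α * s) - exp s))]
  · linarith [abs_nonneg (k s)]

end ModelPhase

/-! ### Amplitudes of the stationary frequencies -/

/-- A `C²` weight whose support is so placed that, for every scale `z ∈ [1, 2]`, the function
`s ↦ ω (z * exp s)` vanishes near `s₀` and `s₁` and outside the interval between them. -/
structure IsWeight (ω : ℝ → ℝ) (s₀ s₁ : ℝ) : Prop where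
  contDiff : ContDiff ℝ 2 ω
  le : s₀ ≤ s₁
  tsupport_subset : tsupport ω ⊆ Set.Ioo (2 * exp s₀) (exp s₁)

/-- The weight `ω (z * exp s)` together with the Jacobian `exp s` of the substitution
`x = z * exp s`. -/
noncomputable def logWeight (ω : ℝ → ℝ) (z s : ℝ) : ℝ := ω (z * exp s) * exp s

section Weight

variable {ω : ℝ → ℝ} {s₀ s₁ : ℝ}

namespace IsWeight

lemma continuous (hω : IsWeight ω s₀ s₁) : Continuous ω := hω.contDiff.continuous

lemma continuous_deriv (hω : IsWeight ω s₀ s₁) : Continuous (deriv ω) :=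
  hω.contDiff.continuous_deriv one_le_two

lemma eventuallyEq_zero_of_le (hω : IsWeight ω s₀ s₁) {x : ℝ} (hx : x ≤ 2 * exp s₀) :
    ω =ᶠ[nhds x] 0 :=
  notMem_tsupport_iff_eventuallyEq.1 fun h => hx.not_gt (hω.tsupport_subset h).1

lemma eventuallyEq_zero_of_ge (hω : IsWeight ω s₀ s₁) {x : ℝ} (hx : exp s₁ ≤ x) :
    ω =ᶠ[nhds x] 0 :=
  notMem_tsupport_iff_eventuallyEq.1 fun h => hx.not_gt (hω.tsupport_subset h).2

lemma eventuallyEq_zero_of_mem (hω : IsWeight ω s₀ s₁) {z s : ℝ} (hz : z ∈ Set.Icc (1 : ℝ) 2)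
    (hs : s ∈ ({s₀, s₁} : Set ℝ)) : ω =ᶠ[nhds (z * exp s)] 0 := by
  rcases hs with rfl | rfl
  · exact hω.eventuallyEq_zero_of_le (by gcongr; exact hz.2)
  · exact hω.eventuallyEq_zero_of_ge (le_mul_of_one_le_left (exp_pos _).le hz.1)

lemma contDiff_logWeight (hω : IsWeight ω s₀ s₁) :
    ContDiff ℝ 2 fun p : ℝ × ℝ => logWeight ω p.1 p.2 := by
  have := hω.contDiff
  unfold logWeight
  fun_prop

lemma logWeight_eventuallyEq_zero (hω : IsWeight ω s₀ s₁) {z s : ℝ}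
    (hz : z ∈ Set.Icc (1 : ℝ) 2) (hs : s ∈ ({s₀, s₁} : Set ℝ)) :
    logWeight ω z =ᶠ[nhds s] 0 := by
  have hcont : Filter.Tendsto (fun s => z * exp s) (nhds s) (nhds (z * exp s)) :=
    (continuous_const.mul continuous_exp).continuousAt
  filter_upwards [hcont.eventually (hω.eventuallyEq_zero_of_mem hz hs)] with t ht
  rw [logWeight, ht, Pi.zero_apply, zero_mul, Pi.zero_apply]

end IsWeight

lemma exists_contDiff_hasDerivAt_snd {E : Type*} [NormedAddCommGroup E] [NormedSpace ℝ E]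
    {n m : WithTop ℕ∞} {F : E × ℝ → ℝ} (hF : ContDiff ℝ n F) (hmn : m + 1 ≤ n) :
    ∃ F' : E × ℝ → ℝ, ContDiff ℝ m F' ∧
      ∀ x s, HasDerivAt (fun s => F (x, s)) (F' (x, s)) s := by
  refine ⟨fun p => fderiv ℝ F p (0, 1), (hF.fderiv_right hmn).clm_apply contDiff_const,
    fun x s => ?_⟩
  have hn : n ≠ 0 := fun h => by simp [h] at hmn
  exact (hF.differentiable hn (x, s)).hasFDerivAt.comp_hasDerivAt s
    ((hasDerivAt_const s x).prodMk (hasDerivAt_id s))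

lemma exp_neg_mul_le_mul_exp (α : ℝ) {z σ t : ℝ} (hz : 1 ≤ z) (hσ : |σ| ≤ t) :
    exp (-(|α| * t)) ≤ z * exp (α * σ) := by
  have hexp : -(|α| * t) ≤ α * σ :=
    calc -(|α| * t) ≤ -(|α| * |σ|) := by gcongr
      _ ≤ α * σ := by rw [← abs_mul]; exact neg_abs_le _
  exact (exp_le_exp.2 hexp).trans (le_mul_of_one_le_left (exp_pos _).le hz)

lemma exists_stationary_bound {α : ℝ} (hα0 : α ≠ 0) (hα1 : α ≠ 1) (hs : s₀ ≤ s₁) (t : ℝ)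
    {F : (ℝ × ℝ) × ℝ → ℝ} (hF : ContDiff ℝ 1 F)
    (hF0 : ∀ z ∈ Set.Icc (1 : ℝ) 2, ∀ σ, ∀ s ∈ ({s₀, s₁} : Set ℝ), F ((z, σ), s) = 0) :
    ∃ C : ℝ, 0 ≤ C ∧ ∀ Y : ℝ, 0 < Y → ∀ z ∈ Set.Icc (1 : ℝ) 2, ∀ σ ∈ Set.Icc (-t) t,
      ‖∫ s in s₀..s₁, (F ((z, σ), s) : ℂ) * osc (Y * z * exp (α * σ) * modelPhase α (s - σ))‖ ≤
        C / √Y := by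
  obtain ⟨F', hF', hFd⟩ := exists_contDiff_hasDerivAt_snd hF (m := 0) (zero_add 1).le
  obtain ⟨c, B, hc, hB, hphase⟩ := exists_modelPhase_bounds hα0 hα1 (|s₀| + |s₁| + t)
  obtain ⟨K, hK⟩ := ((isCompact_Icc (a := (1 : ℝ)) (b := 2)).prod
    (isCompact_Icc (a := -t) (b := t))).prod (isCompact_Icc (a := s₀) (b := s₁))
    |>.exists_bound_of_continuousOn (f := fun p => |F p| + |F' p|)
    (hF.continuous.abs.add hF'.continuous.abs).continuousOn
  set D := exp (-(|α| * t)) * c with hD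
  refine ⟨|K| * (s₁ - s₀ + 8 * B * π) / √D, by positivity, fun Y hY z hz σ hσ => ?_⟩
  have hbound (s) (hs : s ∈ Set.Icc s₀ s₁) : |F ((z, σ), s)| + |F' ((z, σ), s)| ≤ |K| := by
    have hKs := (hK ((z, σ), s) ⟨⟨hz, hσ⟩, hs⟩).trans (le_abs_self K)
    rwa [Real.norm_of_nonneg (by positivity)] at hKs
  have hmem (s) (hs : s ∈ Set.Icc s₀ s₁) :
      s - σ ∈ Set.Icc (-(|s₀| + |s₁| + t)) (|s₀| + |s₁| + t) := by
    constructor <;> linarith [neg_abs_le s₀, le_abs_self s₁, abs_nonneg s₀, abs_nonneg s₁,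
      hs.1, hs.2, hσ.1, hσ.2]
  set l := Y * z * exp (α * σ) with hl
  have hz0 : 0 < z := one_pos.trans_le hz.1
  have hl0 : 0 < l := by positivity
  have hlD : Y * D ≤ l * c := by
    rw [hD, hl, ← mul_assoc, mul_assoc Y z]
    gcongr
    exact exp_neg_mul_le_mul_exp α hz.1 (abs_le.2 hσ)
  calc _ ≤ |K| * (s₁ - s₀ + 8 * B * π) / √(l * c) := by
        refine norm_integral_mul_osc_le_of_stationary hs (by positivity)
          (fun s => ((hasDerivAt_modelPhase α (s - σ)).comp_sub_const s σ).const_mul l)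
          (fun s => ((hasDerivAt_modelPhaseDeriv α (s - σ)).comp_sub_const s σ).const_mul l)
          (by fun_prop) (hFd (z, σ)) (by fun_prop) (hF0 z hz σ _ (by simp))
          (hF0 z hz σ _ (by simp)) (σ := σ)
          (fun s hs => by linarith [hbound s hs, abs_nonneg (F' ((z, σ), s))])
          (fun s hs => by linarith [hbound s hs, abs_nonneg (F ((z, σ), s))])
          (fun s hs => ?_) (fun s hs => ?_) (fun s hs => ?_)
        · rw [mul_left_comm, abs_mul, abs_of_pos hl0, mul_assoc]
          exact mul_le_mul_of_nonneg_left (hphase _ (hmem s hs)).1 hl0.le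
        · rw [abs_mul, abs_of_pos hl0]
          exact (mul_le_mul_of_nonneg_left (hphase _ (hmem s hs)).2.1 hl0.le).trans_eq (by ring)
        · rw [abs_mul, abs_of_pos hl0, mul_left_comm]
          exact mul_le_mul_of_nonneg_left (hphase _ (hmem s hs)).2.2 hl0.le
    _ ≤ |K| * (s₁ - s₀ + 8 * B * π) / √(Y * D) := by gcongr
    _ = _ := by rw [Real.sqrt_mul hY.le, div_div, mul_comm (√Y)]

lemma hasDerivAt_intervalIntegral_of_continuous {F F' : ℝ → ℝ → ℂ} {a b : ℝ}
    (hF : Continuous (Function.uncurry F)) (hF' : Continuous (Function.uncurry F'))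
    (hd : ∀ z s, HasDerivAt (fun z => F z s) (F' z s) z) (z : ℝ) :
    HasDerivAt (fun z => ∫ s in a..b, F z s) (∫ s in a..b, F' z s) z := by
  obtain ⟨K, hK⟩ := ((isCompact_Icc (a := z - 1) (b := z + 1)).prod
    (isCompact_uIcc (a := a) (b := b))).exists_bound_of_continuousOn hF'.continuousOn
  exact (intervalIntegral.hasDerivAt_integral_of_dominated_loc_of_deriv_le
    (bound := fun _ => K) (Icc_mem_nhds (sub_one_lt z) (lt_add_one z))
    (.of_forall fun _ => Continuous.aestronglyMeasurable (by fun_prop))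
    (Continuous.intervalIntegrable (by fun_prop) _ _)
    (Continuous.aestronglyMeasurable (by fun_prop))
    (.of_forall fun s hs y hy => hK (y, s) ⟨hy, Set.uIoc_subset_uIcc hs⟩)
    intervalIntegrable_const (.of_forall fun s _ y _ => hd y s)).2

/-- The oscillatory integral attached to the frequency whose phase is stationary at `σ`, with the
value of the phase at `σ` removed. -/
noncomputable def statAmp (ω : ℝ → ℝ) (α s₀ s₁ Y σ z : ℝ) : ℂ :=
  ∫ s in s₀..s₁, (logWeight ω z s : ℂ) * osc (Y * z * exp (α * σ) * modelPhase α (s - σ))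

/-- The derivative of `statAmp` in `z`, by differentiation under the integral sign. -/
noncomputable def statAmpDeriv (ω : ℝ → ℝ) (α s₀ s₁ Y σ z : ℝ) : ℂ :=
  ∫ s in s₀..s₁, ((deriv ω (z * exp s) * exp s * exp s : ℝ) +
      logWeight ω z s * ((Y * exp (α * σ) * modelPhase α (s - σ) : ℝ) * Complex.I)) *
    osc (Y * z * exp (α * σ) * modelPhase α (s - σ))

lemma IsWeight.hasDerivAt_statAmp (hω : IsWeight ω s₀ s₁) (α Y σ z : ℝ) :
    HasDerivAt (statAmp ω α s₀ s₁ Y σ) (statAmpDeriv ω α s₀ s₁ Y σ z) z := by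
  have hωc := hω.continuous
  have hω'c := hω.continuous_deriv
  refine hasDerivAt_intervalIntegral_of_continuous
    (F := fun z s => (logWeight ω z s : ℂ) * osc (Y * z * exp (α * σ) * modelPhase α (s - σ)))
    (F' := fun z s => ((deriv ω (z * exp s) * exp s * exp s : ℝ) +
      logWeight ω z s * ((Y * exp (α * σ) * modelPhase α (s - σ) : ℝ) * Complex.I)) *
      osc (Y * z * exp (α * σ) * modelPhase α (s - σ))) ?_ ?_ (fun z s => ?_) z
  any_goals unfold Function.uncurry logWeight; fun_prop
  have hweight : HasDerivAt (fun z => logWeight ω z s) (deriv ω (z * exp s) * exp s * exp s) z := by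
    change HasDerivAt (fun z => ω (z * exp s) * exp s) _ z
    simpa using ((hω.contDiff.differentiable two_ne_zero (z * exp s)).hasDerivAt.comp z
      ((hasDerivAt_id z).mul_const (exp s))).mul_const (exp s)
  have hphase : HasDerivAt (fun z => Y * z * exp (α * σ) * modelPhase α (s - σ))
      (Y * exp (α * σ) * modelPhase α (s - σ)) z := by
    simpa using ((((hasDerivAt_id z).const_mul Y).mul_const (exp (α * σ))).mul_const
      (modelPhase α (s - σ)))
  exact (hweight.ofReal_comp.mul (hasDerivAt_osc_comp hphase)).congr_deriv (by ring)

lemma IsWeight.continuous_statAmpDeriv (hω : IsWeight ω s₀ s₁) (α Y σ : ℝ) :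
    Continuous (statAmpDeriv ω α s₀ s₁ Y σ) := by
  have hωc := hω.continuous
  have hω'c := hω.continuous_deriv
  refine intervalIntegral.continuous_parametric_intervalIntegral_of_continuous' ?_ _ _
  unfold Function.uncurry logWeight
  fun_prop

lemma integral_mul_modelPhase_mul_osc {f f' q q' : ℝ → ℝ} {α σ : ℝ}
    (hf : ∀ s, HasDerivAt f (f' s) s) (hf' : Continuous f')
    (hq : ∀ s, HasDerivAt q (q' s) s) (hq' : Continuous q')
    (hqphase : ∀ s, modelPhase α s = q s * modelPhaseDeriv α s) (h₀ : f s₀ = 0) (h₁ : f s₁ = 0)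
    (l : ℝ) :
    ∫ s in s₀..s₁, (f s : ℂ) * ((l * modelPhase α (s - σ) : ℝ) * Complex.I) *
        osc (l * modelPhase α (s - σ)) =
      -∫ s in s₀..s₁, ((f' s * q (s - σ) + f s * q' (s - σ) : ℝ) : ℂ) *
        osc (l * modelPhase α (s - σ)) := by
  have hfc : Continuous f := continuous_iff_continuousAt.2 fun s => (hf s).continuousAt
  have hqc : Continuous q := continuous_iff_continuousAt.2 fun s => (hq s).continuousAt
  have hparts := intervalIntegral.integral_mul_deriv_eq_deriv_mul (a := s₀) (b := s₁)
    (u := fun s => ((f s * q (s - σ) : ℝ) : ℂ))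
    (fun s _ => ((hf s).mul ((hq (s - σ)).comp_sub_const s σ)).ofReal_comp)
    (fun s _ => hasDerivAt_osc_comp
      (((hasDerivAt_modelPhase α (s - σ)).comp_sub_const s σ).const_mul l))
    (Continuous.intervalIntegrable (by fun_prop) _ _)
    (Continuous.intervalIntegrable (by fun_prop) _ _)
  simp only [h₀, h₁, zero_mul, Complex.ofReal_zero, sub_zero, zero_sub] at hparts
  rw [← hparts]
  refine intervalIntegral.integral_congr fun s _ => ?_
  rw [hqphase]
  push_cast
  ring

lemma IsWeight.statAmpDeriv_eq (hω : IsWeight ω s₀ s₁) {W : ℝ × ℝ → ℝ} {q : ℝ → ℝ} {α z : ℝ}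
    (hW : ∀ s, HasDerivAt (logWeight ω z) (W (z, s)) s) (hWc : Continuous W) (hq : ContDiff ℝ 1 q)
    (hqphase : ∀ s, modelPhase α s = q s * modelPhaseDeriv α s) (hz : z ∈ Set.Icc (1 : ℝ) 2)
    (Y σ : ℝ) :
    statAmpDeriv ω α s₀ s₁ Y σ z =
      (∫ s in s₀..s₁, ((deriv ω (z * exp s) * exp s * exp s : ℝ) : ℂ) *
        osc (Y * z * exp (α * σ) * modelPhase α (s - σ))) -
      (z : ℂ)⁻¹ * ∫ s in s₀..s₁,
        ((W (z, s) * q (s - σ) + logWeight ω z s * deriv q (s - σ) : ℝ) : ℂ) *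
          osc (Y * z * exp (α * σ) * modelPhase α (s - σ)) := by
  have hz0 : (z : ℂ) ≠ 0 := by exact_mod_cast (one_pos.trans_le hz.1).ne'
  have hωc := hω.continuous
  have hω'c := hω.continuous_deriv
  have hweight : Continuous (logWeight ω z) := by unfold logWeight; fun_prop
  rw [sub_eq_add_neg, ← mul_neg, ← integral_mul_modelPhase_mul_osc hW (by fun_prop)
    (fun s => (hq.differentiable one_ne_zero s).hasDerivAt) (hq.continuous_deriv le_rfl) hqphase
    (hω.logWeight_eventuallyEq_zero hz (.inl rfl)).eq_of_nhds
    (hω.logWeight_eventuallyEq_zero hz (.inr rfl)).eq_of_nhds,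
    ← intervalIntegral.integral_const_mul, ← intervalIntegral.integral_add
    (Continuous.intervalIntegrable (by fun_prop) _ _)
    (Continuous.intervalIntegrable (by fun_prop) _ _), statAmpDeriv]
  refine intervalIntegral.integral_congr fun s _ => ?_
  push_cast
  field_simp

lemma IsWeight.exists_norm_statAmp_le (hω : IsWeight ω s₀ s₁) {α : ℝ} (hα0 : α ≠ 0)
    (hα1 : α ≠ 1) (t : ℝ) :
    ∃ C : ℝ, 0 ≤ C ∧ ∀ Y : ℝ, 0 < Y → ∀ z ∈ Set.Icc (1 : ℝ) 2, ∀ σ ∈ Set.Icc (-t) t,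
      ‖statAmp ω α s₀ s₁ Y σ z‖ ≤ C / √Y :=
  exists_stationary_bound hα0 hα1 hω.le t (F := fun p => logWeight ω p.1.1 p.2)
    ((hω.contDiff_logWeight.of_le one_le_two).comp (g := fun p : ℝ × ℝ => logWeight ω p.1 p.2)
      (f := fun p : (ℝ × ℝ) × ℝ => (p.1.1, p.2)) (by fun_prop))
    fun _ hz _ _ hs => (hω.logWeight_eventuallyEq_zero hz hs).eq_of_nhds

lemma IsWeight.exists_norm_statAmpDeriv_le (hω : IsWeight ω s₀ s₁) {α : ℝ} (hα0 : α ≠ 0)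
    (hα1 : α ≠ 1) (t : ℝ) :
    ∃ C : ℝ, 0 ≤ C ∧ ∀ Y : ℝ, 0 < Y → ∀ z ∈ Set.Icc (1 : ℝ) 2, ∀ σ ∈ Set.Icc (-t) t,
      ‖statAmpDeriv ω α s₀ s₁ Y σ z‖ ≤ C / √Y := by
  obtain ⟨q, hq, hqphase⟩ := exists_modelPhase_eq_mul_deriv hα0 hα1
  obtain ⟨W, hW, hWd⟩ := exists_contDiff_hasDerivAt_snd hω.contDiff_logWeight
    (m := 1) one_add_one_eq_two.le
  have hω' : ContDiff ℝ 1 (deriv ω) := hω.contDiff.deriv' (n := 1)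
  have hq' : ContDiff ℝ 1 (deriv q) := hq.deriv' (n := 1)
  have hq1 : ContDiff ℝ 1 q := hq.of_le one_le_two
  obtain ⟨C₁, hC₁0, hC₁⟩ := exists_stationary_bound hα0 hα1 hω.le t
    (F := fun p => deriv ω (p.1.1 * exp p.2) * exp p.2 * exp p.2) (by fun_prop)
    fun z hz _ s hs => by simp [(hω.eventuallyEq_zero_of_mem hz hs).deriv_eq]
  obtain ⟨C₂, hC₂0, hC₂⟩ := exists_stationary_bound hα0 hα1 hω.le t
    (F := fun p => W (p.1.1, p.2) * q (p.2 - p.1.2) +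
      logWeight ω p.1.1 p.2 * deriv q (p.2 - p.1.2))
    (ContDiff.add (by fun_prop) (((hω.contDiff_logWeight.of_le one_le_two).comp
      (g := fun p : ℝ × ℝ => logWeight ω p.1 p.2)
      (f := fun p : (ℝ × ℝ) × ℝ => (p.1.1, p.2)) (by fun_prop)).mul (by fun_prop)))
    fun z hz _ s hs => by
      have h0 := hω.logWeight_eventuallyEq_zero hz hs
      rw [(hWd z s).unique ((hasDerivAt_const s 0).congr_of_eventuallyEq h0),
        h0.eq_of_nhds, Pi.zero_apply, zero_mul, zero_mul, add_zero]
  refine ⟨C₁ + C₂, by positivity, fun Y hY z hz σ hσ => ?_⟩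
  rw [hω.statAmpDeriv_eq (hWd z) hW.continuous hq1 hqphase hz]
  have hz1 : ‖(z : ℂ)⁻¹‖ ≤ 1 := by
    rw [norm_inv, Complex.norm_real, Real.norm_of_nonneg (by linarith [hz.1])]
    exact inv_le_one_of_one_le₀ hz.1
  calc _ ≤ C₁ / √Y + 1 * (C₂ / √Y) := by
        refine (norm_sub_le _ _).trans (add_le_add (hC₁ Y hY z hz σ hσ) ?_)
        rw [norm_mul]
        exact mul_le_mul hz1 (hC₂ Y hY z hz σ hσ) (norm_nonneg _) zero_le_one
    _ = (C₁ + C₂) / √Y := by ring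

lemma IsWeight.exists_statAmp_bound (hω : IsWeight ω s₀ s₁) {α : ℝ} (hα0 : α ≠ 0) (hα1 : α ≠ 1)
    (t : ℝ) :
    ∃ C : ℝ, 0 ≤ C ∧ ∀ Y : ℝ, 0 < Y → ∀ z ∈ Set.Icc (1 : ℝ) 2, ∀ σ ∈ Set.Icc (-t) t,
      ‖statAmp ω α s₀ s₁ Y σ z‖ ≤ C / √Y ∧ ‖statAmpDeriv ω α s₀ s₁ Y σ z‖ ≤ C / √Y := by
  obtain ⟨C₁, hC₁0, hC₁⟩ := hω.exists_norm_statAmp_le hα0 hα1 t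
  obtain ⟨C₂, hC₂0, hC₂⟩ := hω.exists_norm_statAmpDeriv_le hα0 hα1 t
  refine ⟨C₁ + C₂, by positivity, fun Y hY z hz σ hσ => ⟨?_, ?_⟩⟩
  · exact (hC₁ Y hY z hz σ hσ).trans (by gcongr; linarith)
  · exact (hC₂ Y hY z hz σ hσ).trans (by gcongr; linarith)

end Weight

/-! ### Poisson summation -/

/-- The `k`-th derivative in `s` of the phase `exp (α s) - α ν exp s` of the Fourier transform at
frequency `ν`, in logarithmic coordinates. -/
noncomputable def dualPhase (α ν : ℝ) (k : ℕ) (s : ℝ) : ℝ :=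
  α ^ k * exp (α * s) - α * ν * exp s

/-- For `ν` outside `[W⁻¹, W]`, where `W = dualWindow α s₀ s₁`, the phase `dualPhase α ν 0` has no
stationary point near the interval between `s₀` and `s₁`. -/
noncomputable def dualWindow (α s₀ s₁ : ℝ) : ℝ := 2 * exp (|α - 1| * (|s₀| + |s₁|))

/-- The oscillatory integral dual to the frequency `ν`, at scale `z`. -/
noncomputable def dualIntegral (ω : ℝ → ℝ) (α s₀ s₁ Y ν z : ℝ) : ℂ :=
  ∫ s in s₀..s₁, (logWeight ω z s : ℂ) * osc (Y * z * dualPhase α ν 0 s)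

lemma hasDerivAt_dualPhase (α ν : ℝ) (k : ℕ) (s : ℝ) :
    HasDerivAt (dualPhase α ν k) (dualPhase α ν (k + 1) s) s := by
  refine ((((hasDerivAt_id s).const_mul α).exp.const_mul (α ^ k)).sub
    ((hasDerivAt_exp s).const_mul (α * ν))).congr_deriv ?_
  simp only [dualPhase, id_eq]
  ring

lemma two_le_dualWindow (α s₀ s₁ : ℝ) : 2 ≤ dualWindow α s₀ s₁ :=
  le_mul_of_one_le_right zero_le_two (one_le_exp (by positivity))

lemma dualWindow_pos (α s₀ s₁ : ℝ) : 0 < dualWindow α s₀ s₁ :=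
  two_pos.trans_le (two_le_dualWindow α s₀ s₁)

lemma exp_mem_dualWindow (α : ℝ) {s₀ s₁ s : ℝ} (hs : s ∈ Set.Icc s₀ s₁) :
    exp ((α - 1) * s) ∈ Set.Icc (2 / dualWindow α s₀ s₁) (dualWindow α s₀ s₁ / 2) := by
  have hle : |(α - 1) * s| ≤ |α - 1| * (|s₀| + |s₁|) := by
    rw [abs_mul]
    gcongr
    exact abs_le.2 ⟨by linarith [neg_abs_le s₀, abs_nonneg s₁, hs.1],
      by linarith [le_abs_self s₁, abs_nonneg s₀, hs.2]⟩
  rw [dualWindow, mul_div_cancel_left₀ _ two_ne_zero, ← div_div, div_self two_ne_zero, one_div,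
    ← exp_neg]
  exact ⟨exp_le_exp.2 (abs_le.1 hle).1, exp_le_exp.2 (abs_le.1 hle).2⟩

lemma one_add_abs_le_mul_abs_sub {W x ν : ℝ} (hW : 2 ≤ W) (hx : x ∈ Set.Icc (2 / W) (W / 2))
    (hν : ν ∉ Set.Icc W⁻¹ W) : 1 + |ν| ≤ 2 * W * |x - ν| := by
  have hW0 : 0 < W := by linarith
  have hx₁ : 2 ≤ x * W := (div_le_iff₀ hW0).1 hx.1
  rw [Set.mem_Icc, not_and_or, not_le, not_le] at hν
  rcases hν with hν | hν
  · have hνW : ν * W < 1 := (lt_div_iff₀ hW0).1 (by rwa [one_div])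
    have hlow : 2 * W * (x - ν) ≤ 2 * W * |x - ν| := by gcongr; exact le_abs_self _
    rcases abs_cases ν with ⟨h, h'⟩ | ⟨h, h'⟩ <;> rw [h] <;> nlinarith
  · have hlow : 2 * W * (ν - x) ≤ 2 * W * |x - ν| := by
      gcongr
      rw [abs_sub_comm]
      exact le_abs_self _
    rw [abs_of_pos (hW0.trans hν)]
    nlinarith [hx.2]

lemma exists_dualPhase_bounds {α : ℝ} (hα0 : α ≠ 0) (s₀ s₁ : ℝ) :
    ∃ c L : ℝ, 0 < c ∧ 0 ≤ L ∧
      ∀ ν ∉ Set.Icc (dualWindow α s₀ s₁)⁻¹ (dualWindow α s₀ s₁), ∀ s ∈ Set.Icc s₀ s₁,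
        c * (1 + |ν|) ≤ |dualPhase α ν 1 s| ∧
          ∀ k ∈ ({2, 3} : Set ℕ), |dualPhase α ν k s| ≤ L * (c * (1 + |ν|)) := by
  set W := dualWindow α s₀ s₁
  have hW : 0 < W := dualWindow_pos α s₀ s₁
  obtain ⟨D, hD⟩ := (isCompact_Icc (a := s₀) (b := s₁)).exists_bound_of_continuousOn
    (f := fun s => |α ^ 2 * exp (α * s)| + |α ^ 3 * exp (α * s)| + |α * exp s|) (by fun_prop)
  set c := |α| * exp s₀ / (2 * W) with hc
  have hc0 : 0 < c := by positivity
  refine ⟨c, |D| / c, hc0, by positivity, fun ν hν s hs => ⟨?_, fun k hk => ?_⟩⟩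
  · have hfactor : dualPhase α ν 1 s = α * exp s * (exp ((α - 1) * s) - ν) := by
      rw [sub_one_mul, exp_sub, dualPhase]
      field_simp
    calc c * (1 + |ν|) ≤ c * (2 * W * |exp ((α - 1) * s) - ν|) := by
          gcongr
          exact one_add_abs_le_mul_abs_sub (two_le_dualWindow α s₀ s₁)
            (exp_mem_dualWindow α hs) hν
      _ = |α| * exp s₀ * |exp ((α - 1) * s) - ν| := by rw [hc]; field_simp
      _ ≤ |α| * exp s * |exp ((α - 1) * s) - ν| := by gcongr; exact hs.1
      _ = |dualPhase α ν 1 s| := by rw [hfactor, abs_mul, abs_mul, abs_of_pos (exp_pos s)]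
  · have hDs := (hD s hs).trans (le_abs_self D)
    rw [Real.norm_of_nonneg (by positivity)] at hDs
    have hα : |α ^ k * exp (α * s)| + |α * exp s| ≤ |D| := by
      rcases hk with rfl | rfl
      · linarith [abs_nonneg (α ^ 3 * exp (α * s))]
      · linarith [abs_nonneg (α ^ 2 * exp (α * s))]
    calc |dualPhase α ν k s| ≤ |α ^ k * exp (α * s)| + |α * ν * exp s| := abs_sub _ _
      _ = |α ^ k * exp (α * s)| + |α * exp s| * |ν| := by rw [mul_right_comm, abs_mul (α * exp s)]
      _ ≤ |D| + |D| * |ν| := by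
        exact add_le_add (by linarith [abs_nonneg (α * exp s)])
          (mul_le_mul_of_nonneg_right (by linarith [abs_nonneg (α ^ k * exp (α * s))])
            (abs_nonneg ν))
      _ = |D| / c * (c * (1 + |ν|)) := by field_simp

section Poisson

variable {ω : ℝ → ℝ} {α s₀ s₁ : ℝ}

lemma IsWeight.exists_logWeight_derivs_bound (hω : IsWeight ω s₀ s₁) :
    ∃ (w₁ w₂ : ℝ × ℝ → ℝ) (K : ℝ), 0 ≤ K ∧ Continuous w₂ ∧
      (∀ z s, HasDerivAt (fun s => logWeight ω z s) (w₁ (z, s)) s) ∧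
      (∀ z s, HasDerivAt (fun s => w₁ (z, s)) (w₂ (z, s)) s) ∧
      (∀ z ∈ Set.Icc (1 : ℝ) 2, ∀ s ∈ ({s₀, s₁} : Set ℝ), logWeight ω z s = 0 ∧ w₁ (z, s) = 0) ∧
      ∀ z ∈ Set.Icc (1 : ℝ) 2, ∀ s ∈ Set.Icc s₀ s₁,
        |logWeight ω z s| ≤ K ∧ |w₁ (z, s)| ≤ K ∧ |w₂ (z, s)| ≤ K := by
  obtain ⟨w₁, hw₁, hwd₁⟩ := exists_contDiff_hasDerivAt_snd hω.contDiff_logWeight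
    (m := 1) one_add_one_eq_two.le
  obtain ⟨w₂, hw₂, hwd₂⟩ := exists_contDiff_hasDerivAt_snd hw₁ (m := 0) (zero_add 1).le
  obtain ⟨K, hK⟩ := ((isCompact_Icc (a := (1 : ℝ)) (b := 2)).prod
    (isCompact_Icc (a := s₀) (b := s₁))).exists_bound_of_continuousOn
    (f := fun p => |logWeight ω p.1 p.2| + |w₁ p| + |w₂ p|)
    ((hω.contDiff_logWeight.continuous.abs.add hw₁.continuous.abs).add
      hw₂.continuous.abs).continuousOn
  refine ⟨w₁, w₂, |K|, abs_nonneg K, hw₂.continuous, hwd₁, hwd₂, fun z hz s hs => ?_,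
    fun z hz s hs => ?_⟩
  · have h0 := hω.logWeight_eventuallyEq_zero hz hs
    exact ⟨h0.eq_of_nhds, (hwd₁ z s).unique ((hasDerivAt_const s 0).congr_of_eventuallyEq h0)⟩
  · have hKs := (hK (z, s) ⟨hz, hs⟩).trans (le_abs_self K)
    rw [Real.norm_of_nonneg (by positivity)] at hKs
    have h₀ := abs_nonneg (logWeight ω z s)
    have h₁ := abs_nonneg (w₁ (z, s))
    have h₂ := abs_nonneg (w₂ (z, s))
    exact ⟨by linarith, by linarith, by linarith⟩

lemma IsWeight.exists_dualIntegral_bound (hω : IsWeight ω s₀ s₁) (hα0 : α ≠ 0) :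
    ∃ C : ℝ, 0 ≤ C ∧ ∀ Y : ℝ, 0 < Y → ∀ z ∈ Set.Icc (1 : ℝ) 2,
      ∀ ν ∉ Set.Icc (dualWindow α s₀ s₁)⁻¹ (dualWindow α s₀ s₁),
        ‖dualIntegral ω α s₀ s₁ Y ν z‖ ≤ C / (Y * (1 + |ν|)) ^ 2 := by
  obtain ⟨c, L, hc, hL, hphase⟩ := exists_dualPhase_bounds hα0 s₀ s₁
  obtain ⟨w₁, w₂, K, hK, hw₂, hwd₁, hwd₂, hw0, hbound⟩ := hω.exists_logWeight_derivs_bound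
  refine ⟨(s₁ - s₀) * (K * (1 + 4 * L + 3 * L ^ 2)) / c ^ 2,
    by have := sub_nonneg.2 hω.le; positivity, fun Y hY z hz ν hν => ?_⟩
  have hz0 : 0 < z := one_pos.trans_le hz.1
  have hΓ (k s) := (hasDerivAt_dualPhase α ν k s).const_mul (Y * z)
  have hderiv (k) (hk : k ∈ ({2, 3} : Set ℕ)) (s) (hs : s ∈ Set.Icc s₀ s₁) :
      |Y * z * dualPhase α ν k s| ≤ L * (Y * z * (c * (1 + |ν|))) := by
    rw [abs_mul, abs_of_pos (mul_pos hY hz0), mul_left_comm]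
    gcongr
    exact (hphase ν hν s hs).2 k hk
  calc ‖dualIntegral ω α s₀ s₁ Y ν z‖
      ≤ (s₁ - s₀) * (K * (1 + 4 * L + 3 * L ^ 2)) / (Y * z * (c * (1 + |ν|))) ^ 2 := by
        refine norm_integral_mul_osc_le_of_nonstationary hω.le (by positivity) hL (hwd₁ z)
          (hwd₂ z) (by fun_prop) (hΓ 0) (hΓ 1) (hΓ 2) (by unfold dualPhase; fun_prop)
          (fun s hs => (hbound z hz s hs).1) (fun s hs => (hbound z hz s hs).2.1)
          (fun s hs => (hbound z hz s hs).2.2) (fun s hs => ?_)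
          (hderiv 2 (by simp)) (hderiv 3 (by simp))
          (hw0 z hz s₀ (by simp)).1 (hw0 z hz s₁ (by simp)).1
          (hw0 z hz s₀ (by simp)).2 (hw0 z hz s₁ (by simp)).2
        rw [abs_mul, abs_of_pos (mul_pos hY hz0)]
        gcongr
        exact (hphase ν hν s hs).1
    _ ≤ (s₁ - s₀) * (K * (1 + 4 * L + 3 * L ^ 2)) / (Y * 1 * (c * (1 + |ν|))) ^ 2 := by
        have := sub_nonneg.2 hω.le
        gcongr
        exact hz.1
    _ = (s₁ - s₀) * (K * (1 + 4 * L + 3 * L ^ 2)) / c ^ 2 / (Y * (1 + |ν|)) ^ 2 := by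
        field_simp

/-- The smoothed exponential sum with phase `y (n / N) ^ α`; the sum runs over all `n` for which
the weight can be nonzero. -/
noncomputable def smoothSum (ω : ℝ → ℝ) (α s₁ N y : ℝ) : ℂ :=
  ∑ n ∈ Finset.range (⌊exp s₁ * N⌋₊ + 1), (ω (n / N) : ℂ) * osc (y * ((n : ℝ) / N) ^ α)

/-- The summand of `smoothSum` at a real argument; truncating the base of the power below the
support of the weight makes it continuous at `0`. -/
noncomputable def smoothSummand (ω : ℝ → ℝ) (α s₀ N y x : ℝ) : ℂ :=
  (ω (x / N) : ℂ) * osc (y * (max (x / N) (2 * exp s₀)) ^ α)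

lemma IsWeight.continuous_smoothSummand (hω : IsWeight ω s₀ s₁) (α N y : ℝ) :
    Continuous (smoothSummand ω α s₀ N y) := by
  have hωc := hω.continuous
  have hmax : Continuous fun x : ℝ => (max (x / N) (2 * exp s₀)) ^ α :=
    Continuous.rpow_const (by fun_prop) fun x => .inl (lt_max_of_lt_right (by positivity)).ne'
  unfold smoothSummand
  fun_prop

lemma IsWeight.smoothSummand_eq (hω : IsWeight ω s₀ s₁) (α N y x : ℝ) :
    smoothSummand ω α s₀ N y x = (ω (x / N) : ℂ) * osc (y * (x / N) ^ α) := by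
  rw [smoothSummand]
  rcases le_total (x / N) (2 * exp s₀) with h | h
  · simp [(hω.eventuallyEq_zero_of_le h).eq_of_nhds]
  · rw [max_eq_left h]

lemma IsWeight.support_smoothSummand_subset (hω : IsWeight ω s₀ s₁) {N : ℝ} (hN : 0 < N)
    (α y : ℝ) :
    Function.support (smoothSummand ω α s₀ N y) ⊆ Set.Ioo (N * (2 * exp s₀)) (N * exp s₁) := by
  intro x hx
  have hx0 : ω (x / N) ≠ 0 := fun h => hx (by simp [smoothSummand, h])
  have hmem := hω.tsupport_subset (subset_tsupport ω hx0)
  rwa [Set.mem_Ioo, lt_div_iff₀' hN, div_lt_iff₀' hN] at hmem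

lemma IsWeight.fourier_smoothSummand (hω : IsWeight ω s₀ s₁) {N Y z ξ ν : ℝ} (hN : 0 < N)
    (hz : z ∈ Set.Icc (1 : ℝ) 2) (hν : Y * (α * ν) = 2 * π * N * ξ) :
    FourierTransform.fourier (smoothSummand ω α s₀ N (Y * z ^ (1 - α))) ξ =
      N * z * dualIntegral ω α s₀ s₁ Y ν z := by
  have hz0 : 0 < z := one_pos.trans_le hz.1
  have hcont := hω.continuous_smoothSummand α N (Y * z ^ (1 - α))
  have hsupp : (Function.support fun x : ℝ => Complex.exp (↑(-2 * π * x * ξ) * Complex.I) •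
      smoothSummand ω α s₀ N (Y * z ^ (1 - α)) x) ⊆
        Set.Ioc (N * z * exp s₀) (N * z * exp s₁) := by
    intro x hx
    have hmem := hω.support_smoothSummand_subset hN α (Y * z ^ (1 - α)) (a := x)
      fun h => hx (by simp only [h, smul_zero])
    refine ⟨hmem.1.trans_le' ?_, hmem.2.le.trans ?_⟩
    · rw [mul_assoc]; gcongr; exact hz.2
    · rw [mul_assoc]; gcongr; exact le_mul_of_one_le_left (exp_pos _).le hz.1
  rw [Real.fourier_real_eq_integral_exp_smul,
    ← intervalIntegral.integral_eq_integral_of_support_subset hsupp,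
    ← intervalIntegral.integral_deriv_smul_comp (f := fun s => N * z * exp s)
      (f' := fun s => N * z * exp s) (fun s _ => (hasDerivAt_exp s).const_mul _)
      (by fun_prop) (by fun_prop), dualIntegral, ← intervalIntegral.integral_const_mul]
  refine intervalIntegral.integral_congr fun s _ => ?_
  have hx : N * z * exp s / N = z * exp s := by field_simp
  have hpow : Y * z ^ (1 - α) * (z * exp s) ^ α = Y * z * exp (α * s) := by
    rw [mul_rpow hz0.le (exp_pos s).le, ← exp_mul, mul_comm s α]
    have : z ^ (1 - α) * z ^ α = z := by rw [← rpow_add hz0]; simp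
    linear_combination (Y * exp (α * s)) * this
  have hphase : Y * z * dualPhase α ν 0 s =
      Y * z * exp (α * s) + -2 * π * (N * z * exp s) * ξ := by
    rw [dualPhase]
    linear_combination (-z * exp s) * hν
  simp only [Function.comp, smul_eq_mul, Complex.real_smul, hω.smoothSummand_eq, hx, hpow]
  rw [hphase, osc_add, logWeight]
  simp only [osc]
  push_cast
  ring

lemma IsWeight.smoothSum_eq_tsum (hω : IsWeight ω s₀ s₁) {N : ℝ} (hN : 0 < N) (y : ℝ) :
    smoothSum ω α s₁ N y = ∑' n : ℤ, smoothSummand ω α s₀ N y n := by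
  rw [tsum_eq_sum (s := (Finset.range (⌊exp s₁ * N⌋₊ + 1)).map Nat.castEmbedding), Finset.sum_map]
  · refine Finset.sum_congr rfl fun n _ => ?_
    rw [hω.smoothSummand_eq, Nat.castEmbedding_apply, Int.cast_natCast]
  · intro n hn
    by_contra hne
    have hmem := hω.support_smoothSummand_subset hN α y hne
    have hn0 : 0 < n := by exact_mod_cast (show 0 < N * (2 * exp s₀) by positivity).trans hmem.1
    lift n to ℕ using hn0.le
    refine hn (Finset.mem_map.2 ⟨n, Finset.mem_range.2 (Nat.lt_succ_of_le (Nat.le_floor ?_)), rfl⟩)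
    rw [mul_comm]
    exact_mod_cast hmem.2.le

lemma exists_equiv_abs_mul_eq (α : ℝ) : ∃ e : ℤ ≃ ℤ, ∀ m : ℤ, α * e m = |α| * m := by
  rcases le_total 0 α with h | h
  · exact ⟨Equiv.refl ℤ, fun m => by rw [abs_of_nonneg h, Equiv.refl_apply]⟩
  · exact ⟨Equiv.neg ℤ, fun m => by rw [abs_of_nonpos h, Equiv.neg_apply]; push_cast; ring⟩

lemma IsWeight.smoothSum_eq_tsum_dualIntegral (hω : IsWeight ω s₀ s₁) {N Y M z : ℝ}
    (hN : 0 < N) (hM : M ≠ 0) (hMY : |α| * Y = 2 * π * N * M) (hz : z ∈ Set.Icc (1 : ℝ) 2)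
    (hsum : Summable fun m : ℤ => dualIntegral ω α s₀ s₁ Y (m / M) z) :
    smoothSum ω α s₁ N (Y * z ^ (1 - α)) =
      N * z * ∑' m : ℤ, dualIntegral ω α s₀ s₁ Y (m / M) z := by
  obtain ⟨e, he⟩ := exists_equiv_abs_mul_eq α
  have hfourier (m : ℤ) := hω.fourier_smoothSummand (α := α) (Y := Y) (ξ := m) (ν := e m / M) hN hz
    (by
      field_simp
      linear_combination Y * he m + (m : ℝ) * hMY)
  have hdecay : smoothSummand ω α s₀ N (Y * z ^ (1 - α)) =O[Filter.cocompact ℝ]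
      fun x => |x| ^ (-(2 : ℝ)) := by
    refine Filter.EventuallyEq.trans_isBigO ?_ (Asymptotics.isBigO_zero _ _)
    filter_upwards [(isCompact_Icc (a := N * (2 * exp s₀)) (b := N * exp s₁)).compl_mem_cocompact]
      with x hx
    exact Function.notMem_support.1 fun h =>
      hx (Set.Ioo_subset_Icc_self (hω.support_smoothSummand_subset hN _ _ h))
  have hpoisson := Real.tsum_eq_tsum_fourier_of_rpow_decay_of_summable
    (hω.continuous_smoothSummand α N _) one_lt_two hdecay
    (by simp_rw [hfourier]; exact (e.summable_iff.2 hsum).mul_left _) 0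
  simp only [zero_add] at hpoisson
  rw [hω.smoothSum_eq_tsum hN, hpoisson,
    ← e.tsum_eq fun m : ℤ => dualIntegral ω α s₀ s₁ Y (m / M) z, ← tsum_mul_left]
  refine tsum_congr fun m => ?_
  rw [hfourier]
  simp

lemma summable_and_norm_tsum_sub_sum_le {ι E : Type*} [NormedAddCommGroup E] [CompleteSpace E]
    {F : ι → E} {g : ι → ℝ} {c : ℝ} {T : Finset ι} (hg : HasSum g c) (hg0 : ∀ i, 0 ≤ g i)
    (hF : ∀ i ∉ T, ‖F i‖ ≤ g i) : Summable F ∧ ‖∑' i, F i - ∑ i ∈ T, F i‖ ≤ c := by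
  have hsum : Summable F := by
    refine Summable.of_norm_bounded_eventually hg.summable ?_
    filter_upwards [T.finite_toSet.compl_mem_cofinite] with i hi using hF i hi
  refine ⟨hsum, ?_⟩
  rw [← hsum.sum_add_tsum_compl (s := T), add_sub_cancel_left]
  refine (tsum_of_norm_bounded (hg.summable.subtype _).hasSum fun i => hF i i.2).trans ?_
  rw [← hg.tsum_eq]
  exact hg.summable.tsum_subtype_le _ _ hg0

lemma hasSum_ite_add_mul_inv_sq (M : ℝ) :
    HasSum (fun m : ℤ => (if m = 0 then 1 else 0) + M ^ 2 * (1 / (m : ℝ) ^ 2))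
      (1 + M ^ 2 * ∑' m : ℤ, 1 / (m : ℝ) ^ 2) :=
  (hasSum_ite_eq (0 : ℤ) (1 : ℝ)).add
    (((Real.summable_one_div_int_pow (p := 2)).2 one_lt_two).hasSum.mul_left _)

lemma inv_one_add_abs_div_sq_le {M : ℝ} (hM : 0 < M) (m : ℤ) :
    ((1 + |m / M|) ^ 2)⁻¹ ≤ (if m = 0 then 1 else 0) + M ^ 2 * (1 / (m : ℝ) ^ 2) := by
  split_ifs with h0
  · simp [h0]
  · have hm : (m : ℝ) ≠ 0 := by exact_mod_cast h0
    calc ((1 + |m / M|) ^ 2)⁻¹ ≤ (|m / M| ^ 2)⁻¹ := by gcongr; linarith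
      _ = _ := by rw [sq_abs]; field_simp; ring

/-- The frequencies retained in the dual sum. -/
noncomputable def dualRange (α s₀ s₁ M : ℝ) : Finset ℕ :=
  Finset.Icc ⌈(dualWindow α s₀ s₁)⁻¹ * M⌉₊ ⌊dualWindow α s₀ s₁ * M⌋₊

lemma div_mem_of_mem_dualRange {M : ℝ} (hM : 0 < M) {m : ℕ} (hm : m ∈ dualRange α s₀ s₁ M) :
    (m : ℝ) / M ∈ Set.Icc (dualWindow α s₀ s₁)⁻¹ (dualWindow α s₀ s₁) := by
  have hW := dualWindow_pos α s₀ s₁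
  rw [dualRange, Finset.mem_Icc, Nat.ceil_le, Nat.le_floor_iff (by positivity)] at hm
  exact ⟨(le_div_iff₀ hM).2 hm.1, (div_le_iff₀ hM).2 hm.2⟩

lemma div_notMem_of_notMem_dualRange {M : ℝ} (hM : 0 < M) {m : ℤ}
    (hm : m ∉ (dualRange α s₀ s₁ M).map (Nat.castEmbedding (R := ℤ))) :
    (m : ℝ) / M ∉ Set.Icc (dualWindow α s₀ s₁)⁻¹ (dualWindow α s₀ s₁) := by
  have hW := dualWindow_pos α s₀ s₁
  rintro ⟨h₁, h₂⟩
  rw [le_div_iff₀ hM] at h₁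
  rw [div_le_iff₀ hM] at h₂
  have hm0 : 0 ≤ m := by exact_mod_cast (show (0 : ℝ) ≤ m from le_trans (by positivity) h₁)
  lift m to ℕ using hm0
  exact hm (Finset.mem_map.2 ⟨m, Finset.mem_Icc.2 ⟨Nat.ceil_le.2 h₁, Nat.le_floor h₂⟩, rfl⟩)

lemma IsWeight.exists_norm_tsum_dualIntegral_sub_le (hω : IsWeight ω s₀ s₁) (hα0 : α ≠ 0) :
    ∃ C : ℝ, 0 ≤ C ∧ ∀ Y M : ℝ, 0 < Y → 0 < M → ∀ z ∈ Set.Icc (1 : ℝ) 2,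
      Summable (fun m : ℤ => dualIntegral ω α s₀ s₁ Y (m / M) z) ∧
      ‖∑' m : ℤ, dualIntegral ω α s₀ s₁ Y (m / M) z -
          ∑ m ∈ dualRange α s₀ s₁ M, dualIntegral ω α s₀ s₁ Y (m / M) z‖ ≤
        C / Y ^ 2 * (1 + M ^ 2 * ∑' m : ℤ, 1 / (m : ℝ) ^ 2) := by
  obtain ⟨C, hC, hbound⟩ := hω.exists_dualIntegral_bound hα0
  refine ⟨C, hC, fun Y M hY hM z hz => ?_⟩
  obtain ⟨hsum, htail⟩ := summable_and_norm_tsum_sub_sum_le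
    (F := fun m : ℤ => dualIntegral ω α s₀ s₁ Y (m / M) z)
    (T := (dualRange α s₀ s₁ M).map Nat.castEmbedding)
    ((hasSum_ite_add_mul_inv_sq M).mul_left (C / Y ^ 2)) (fun m => by positivity) fun m hm => by
      refine (hbound Y hY z hz _ (div_notMem_of_notMem_dualRange hM hm)).trans ?_
      rw [mul_pow, ← div_div, div_eq_mul_inv (C / Y ^ 2)]
      gcongr
      exact inv_one_add_abs_div_sq_le hM m
  rw [Finset.sum_map] at htail
  exact ⟨hsum, htail⟩

lemma IsWeight.exists_norm_smoothSum_sub_le (hω : IsWeight ω s₀ s₁) (hα0 : α ≠ 0) :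
    ∃ C : ℝ, 0 ≤ C ∧ ∀ N Y M : ℝ, 0 < N → 0 < Y → |α| * Y = 2 * π * N * M →
      ∀ z ∈ Set.Icc (1 : ℝ) 2,
      ‖smoothSum ω α s₁ N (Y * z ^ (1 - α)) -
          N * z * ∑ m ∈ dualRange α s₀ s₁ M, dualIntegral ω α s₀ s₁ Y (m / M) z‖ ≤
        C * (N / Y ^ 2 + 1 / N) := by
  obtain ⟨C, hC, htail⟩ := hω.exists_norm_tsum_dualIntegral_sub_le hα0
  set Z : ℝ := ∑' m : ℤ, 1 / (m : ℝ) ^ 2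
  have hZ : 0 ≤ Z := tsum_nonneg fun m => by positivity
  refine ⟨2 * C * (1 + |α| ^ 2 * Z / (2 * π) ^ 2), by positivity, fun N Y M hN hY hMY z hz => ?_⟩
  have hM : 0 < M := by
    have : 0 < 2 * π * N * M := hMY ▸ by positivity
    exact pos_of_mul_pos_right this (by positivity)
  obtain ⟨hsum, htailz⟩ := htail Y M hY hM z hz
  have hz0 : 0 < z := one_pos.trans_le hz.1
  calc _ = N * z * ‖∑' m : ℤ, dualIntegral ω α s₀ s₁ Y (m / M) z -
          ∑ m ∈ dualRange α s₀ s₁ M, dualIntegral ω α s₀ s₁ Y (m / M) z‖ := by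
        rw [hω.smoothSum_eq_tsum_dualIntegral hN hM.ne' hMY hz hsum, ← mul_sub, norm_mul,
          norm_mul, Complex.norm_of_nonneg hN.le, Complex.norm_of_nonneg hz0.le]
    _ ≤ N * 2 * (C / Y ^ 2 * (1 + M ^ 2 * Z)) := by gcongr; exact hz.2
    _ = 2 * C * (N / Y ^ 2 + |α| ^ 2 * Z / (2 * π) ^ 2 * (1 / N)) := by
        rw [show M = |α| * Y / (2 * π * N) by rw [hMY]; field_simp]
        field_simp
    _ ≤ 2 * C * ((1 + |α| ^ 2 * Z / (2 * π) ^ 2) * (N / Y ^ 2 + 1 / N)) := by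
        have h₁ : 0 ≤ |α| ^ 2 * Z / (2 * π) ^ 2 * (N / Y ^ 2) := by positivity
        have h₂ : 0 < 1 / N := by positivity
        gcongr
        linarith
    _ = _ := by ring

end Poisson

/-! ### Fourth moments of exponential sums -/

section FourthMoment

variable {ι : Type*} {A : Finset ι} {t : ι → ℝ}

/-- The quadruples of elements of `A`. -/
def quads (A : Finset ι) : Finset (ι × ι × ι × ι) := A ×ˢ A ×ˢ A ×ˢ A

/-- The gap `t n₁ + t n₂ - t n₃ - t n₄` of a quadruple, the quantity measuring how far the
quadruple is from solving the additive equation in the values of `t`. -/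
def quadGap (t : ι → ℝ) (q : ι × ι × ι × ι) : ℝ := t q.1 + t q.2.1 - t q.2.2.1 - t q.2.2.2

lemma mem_quads {q : ι × ι × ι × ι} :
    q ∈ quads A ↔ q.1 ∈ A ∧ q.2.1 ∈ A ∧ q.2.2.1 ∈ A ∧ q.2.2.2 ∈ A := by
  simp only [quads, Finset.mem_product]

lemma card_quads (A : Finset ι) : (quads A).card = A.card ^ 4 := by
  simp only [quads, Finset.card_product]
  ring

lemma quadGap_const_mul (t : ι → ℝ) (c : ℝ) (q : ι × ι × ι × ι) :
    quadGap (fun n => c * t n) q = c * quadGap t q := by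
  simp only [quadGap]
  ring

/-- The coefficient `b n₁ * b n₂ * conj (b n₃) * conj (b n₄)` with which a quadruple enters the
fourth power of the modulus of an exponential sum with coefficients `b`. -/
def quadCoeff (b : ι → ℂ) (q : ι × ι × ι × ι) : ℂ :=
  b q.1 * b q.2.1 * (starRingEnd ℂ (b q.2.2.1) * starRingEnd ℂ (b q.2.2.2))

lemma norm_quadCoeff_le {b : ι → ℂ} {B : ℝ} (hb : ∀ m ∈ A, ‖b m‖ ≤ B) {q : ι × ι × ι × ι}
    (hq : q ∈ quads A) : ‖quadCoeff b q‖ ≤ B ^ 4 := by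
  obtain ⟨h₁, h₂, h₃, h₄⟩ := mem_quads.1 hq
  have hB : 0 ≤ B := (norm_nonneg _).trans (hb _ h₁)
  simp only [quadCoeff, norm_mul, RCLike.norm_conj]
  calc ‖b q.1‖ * ‖b q.2.1‖ * (‖b q.2.2.1‖ * ‖b q.2.2.2‖) ≤ B * B * (B * B) := by
        gcongr <;> exact hb _ ‹_›
    _ = B ^ 4 := by ring

lemma ofReal_norm_pow_four (w : ℂ) :
    ((‖w‖ ^ 4 : ℝ) : ℂ) = w * (w * (starRingEnd ℂ w * starRingEnd ℂ w)) := by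
  calc ((‖w‖ ^ 4 : ℝ) : ℂ) = ((‖w‖ : ℂ) ^ 2) ^ 2 := by push_cast; ring
    _ = w * (w * (starRingEnd ℂ w * starRingEnd ℂ w)) := by rw [← Complex.mul_conj']; ring

lemma norm_sum_mul_osc_pow_four (A : Finset ι) (b : ι → ℂ) (t : ι → ℝ) (z : ℝ) :
    ((‖∑ m ∈ A, b m * osc (z * t m)‖ ^ 4 : ℝ) : ℂ) =
      ∑ q ∈ quads A, quadCoeff b q * osc (z * quadGap t q) := by
  rw [ofReal_norm_pow_four, quads, Finset.sum_product]
  simp_rw [Finset.sum_product, map_sum, Finset.sum_mul_sum, Finset.mul_sum]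
  refine Finset.sum_congr rfl fun n₁ _ => Finset.sum_congr rfl fun n₂ _ =>
    Finset.sum_congr rfl fun n₃ _ => Finset.sum_congr rfl fun n₄ _ => ?_
  have hphase : z * quadGap t (n₁, n₂, n₃, n₄) =
      z * t n₁ + z * t n₂ + -(z * t n₃) + -(z * t n₄) := by
    simp only [quadGap]
    ring
  rw [hphase, osc_add, osc_add, osc_add, map_mul, map_mul, conj_osc, conj_osc, quadCoeff]
  ring

lemma integrable_exp_neg_sq : MeasureTheory.Integrable fun z : ℝ => exp (-z ^ 2) := by
  simpa using integrable_exp_neg_mul_sq one_pos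

lemma integral_osc_mul_exp_neg_sq (x : ℝ) :
    ∫ z : ℝ, osc (z * x) * ((exp (-z ^ 2) : ℝ) : ℂ) = ((√π * exp (-x ^ 2 / 4) : ℝ) : ℂ) := by
  have hgauss := fourierIntegral_gaussian (b := 1) (by simp) (x : ℂ)
  have hsqrt : (π : ℂ) ^ (1 / 2 : ℂ) = ((√π : ℝ) : ℂ) := by
    rw [sqrt_eq_rpow, Complex.ofReal_cpow pi_pos.le]
    norm_num
  rw [div_one, mul_one, hsqrt] at hgauss
  push_cast
  rw [← hgauss]
  refine MeasureTheory.integral_congr_ae (Filter.Eventually.of_forall fun z => ?_)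
  simp only [osc]
  push_cast
  ring_nf

lemma integral_norm_sum_pow_four_mul_gaussian (A : Finset ι) (b : ι → ℂ) (t : ι → ℝ) :
    ((∫ z : ℝ, ‖∑ m ∈ A, b m * osc (z * t m)‖ ^ 4 * exp (-z ^ 2) : ℝ) : ℂ) =
      ∑ q ∈ quads A, quadCoeff b q * ((√π * exp (-quadGap t q ^ 2 / 4) : ℝ) : ℂ) := by
  have hint (q : ι × ι × ι × ι) : MeasureTheory.Integrable fun z : ℝ =>
      quadCoeff b q * (osc (z * quadGap t q) * ((exp (-z ^ 2) : ℝ) : ℂ)) :=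
    (integrable_exp_neg_sq.ofReal.bdd_mul (c := 1)
      (Continuous.aestronglyMeasurable (by fun_prop))
      (Filter.Eventually.of_forall fun z => (norm_osc _).le)).const_mul _
  simp_rw [← integral_complex_ofReal, ← integral_osc_mul_exp_neg_sq,
    ← MeasureTheory.integral_const_mul]
  rw [← MeasureTheory.integral_finsetSum _ fun q _ => hint q]
  simp_rw [Complex.ofReal_mul, norm_sum_mul_osc_pow_four, Finset.sum_mul, mul_assoc]

lemma intervalIntegral_le_integral_mul_gaussian {F : ℝ → ℝ} {K : ℝ} (hF : Continuous F)
    (hF0 : ∀ z, 0 ≤ F z) (hFK : ∀ z, F z ≤ K) :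
    ∫ z in (1 : ℝ)..2, F z ≤ exp 4 * ∫ z : ℝ, F z * exp (-z ^ 2) := by
  have hint : MeasureTheory.Integrable fun z : ℝ => F z * exp (-z ^ 2) :=
    integrable_exp_neg_sq.bdd_mul hF.aestronglyMeasurable (Filter.Eventually.of_forall fun z =>
      (Real.norm_of_nonneg (hF0 z)).le.trans (hFK z))
  calc ∫ z in (1 : ℝ)..2, F z ≤ ∫ z in (1 : ℝ)..2, exp 4 * (F z * exp (-z ^ 2)) := by
        refine intervalIntegral.integral_mono_on one_le_two (hF.intervalIntegrable _ _)
          (Continuous.intervalIntegrable (by fun_prop) _ _) fun z hz => ?_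
        calc F z ≤ F z * exp (4 - z ^ 2) :=
              le_mul_of_one_le_right (hF0 z) (one_le_exp (by nlinarith [hz.1, hz.2]))
          _ = exp 4 * (F z * exp (-z ^ 2)) := by rw [sub_eq_add_neg, exp_add]; ring
    _ = exp 4 * ∫ z in (1 : ℝ)..2, F z * exp (-z ^ 2) := intervalIntegral.integral_const_mul _ _
    _ ≤ exp 4 * ∫ z : ℝ, F z * exp (-z ^ 2) := by
        rw [intervalIntegral.integral_of_le one_le_two]
        refine mul_le_mul_of_nonneg_left (MeasureTheory.setIntegral_le_integral hint
          (Filter.Eventually.of_forall fun z => ?_)) (exp_pos _).le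
        exact mul_nonneg (hF0 z) (exp_pos _).le

lemma integral_norm_sum_pow_four_le {b : ι → ℂ} (t : ι → ℝ) {B : ℝ} (hb : ∀ m ∈ A, ‖b m‖ ≤ B) :
    ∫ z in (1 : ℝ)..2, ‖∑ m ∈ A, b m * osc (z * t m)‖ ^ 4 ≤
      exp 4 * (√π * B ^ 4 * ∑ q ∈ quads A, exp (-quadGap t q ^ 2 / 4)) := by
  have hbound (z : ℝ) : ‖∑ m ∈ A, b m * osc (z * t m)‖ ^ 4 ≤ (∑ m ∈ A, ‖b m‖) ^ 4 := by
    refine pow_le_pow_left₀ (norm_nonneg _) (norm_sum_le_of_le _ fun m _ => ?_) 4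
    rw [norm_mul, norm_osc, mul_one]
  refine (intervalIntegral_le_integral_mul_gaussian (by fun_prop) (fun z => by positivity)
    hbound).trans (mul_le_mul_of_nonneg_left ?_ (exp_pos 4).le)
  refine (Real.le_norm_self _).trans ?_
  rw [← Complex.norm_real, integral_norm_sum_pow_four_mul_gaussian, Finset.mul_sum]
  refine norm_sum_le_of_le _ fun q hq => ?_
  rw [norm_mul, Complex.norm_real, Real.norm_of_nonneg (by positivity)]
  calc ‖quadCoeff b q‖ * (√π * exp (-quadGap t q ^ 2 / 4))
      ≤ B ^ 4 * (√π * exp (-quadGap t q ^ 2 / 4)) := by gcongr; exact norm_quadCoeff_le hb hq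
    _ = √π * B ^ 4 * exp (-quadGap t q ^ 2 / 4) := by ring

lemma exp_neg_sq_div_four_le (y : ℝ) : exp (-y ^ 2 / 4) ≤ 100 / (|y| + 1) ^ 3 := by
  rw [neg_div, exp_neg, inv_le_comm₀ (exp_pos _) (by positivity), inv_div]
  refine le_trans ?_ (quadratic_le_exp_of_nonneg (by positivity : 0 ≤ y ^ 2 / 4))
  rw [div_le_iff₀ (by norm_num), ← sq_abs y]
  nlinarith [sq_nonneg (|y| ^ 2 - |y|), sq_nonneg (|y| - 1), sq_nonneg (|y| ^ 2 - 1),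
    pow_nonneg (abs_nonneg y) 3]

lemma summable_inv_succ_pow {p : ℕ} (hp : 1 < p) :
    Summable fun j : ℕ => (((j : ℝ) + 1) ^ p)⁻¹ := by
  simpa using (summable_nat_add_iff 1).2 (Real.summable_nat_pow_inv.2 hp)

lemma sum_exp_neg_sq_le {Q : Finset ι} {x : ι → ℝ} {P : ℝ}
    (hP : ∀ j : ℕ, ((Q.filter fun q => |x q| < j + 1).card : ℝ) ≤ P * (j + 1)) :
    ∑ q ∈ Q, exp (-x q ^ 2 / 4) ≤ 100 * (∑' j : ℕ, (((j : ℝ) + 1) ^ 2)⁻¹) * P := by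
  set f : ι → ℕ → ℝ := fun q j => if |x q| < j + 1 then (((j : ℝ) + 1) ^ 3)⁻¹ else 0 with hf
  have hf0 (q : ι) (j : ℕ) : 0 ≤ f q j := by
    simp only [hf]
    split_ifs <;> positivity
  have hfs (q : ι) : Summable (f q) := by
    refine (summable_inv_succ_pow (p := 3) (by norm_num)).of_nonneg_of_le (hf0 q) fun j => ?_
    simp only [hf]
    split_ifs <;> first | exact le_rfl | positivity
  have hpointwise (q : ι) : exp (-x q ^ 2 / 4) ≤ 100 * ∑' j, f q j := by
    refine (exp_neg_sq_div_four_le _).trans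
      (mul_le_mul_of_nonneg_left (le_trans ?_ ((hfs q).le_tsum ⌊|x q|⌋₊ fun j _ => hf0 q j))
        (by norm_num))
    simp only [hf]
    rw [if_pos (Nat.lt_floor_add_one _)]
    have := Nat.floor_le (abs_nonneg (x q))
    gcongr
  have hlevel (j : ℕ) : ∑ q ∈ Q, f q j ≤ P * (((j : ℝ) + 1) ^ 2)⁻¹ := by
    simp only [hf]
    rw [← Finset.sum_filter, Finset.sum_const, nsmul_eq_mul]
    calc _ ≤ P * (j + 1) * (((j : ℝ) + 1) ^ 3)⁻¹ := by gcongr; exact hP j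
      _ = P * (((j : ℝ) + 1) ^ 2)⁻¹ := by field_simp
  calc ∑ q ∈ Q, exp (-x q ^ 2 / 4) ≤ ∑ q ∈ Q, 100 * ∑' j, f q j :=
        Finset.sum_le_sum fun q _ => hpointwise q
    _ = 100 * ∑' j, ∑ q ∈ Q, f q j := by
        rw [Summable.tsum_finsetSum fun q _ => hfs q, Finset.mul_sum]
    _ ≤ 100 * ∑' j : ℕ, P * (((j : ℝ) + 1) ^ 2)⁻¹ :=
        mul_le_mul_of_nonneg_left (Summable.tsum_le_tsum hlevel (summable_sum fun q _ => hfs q)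
          ((summable_inv_succ_pow one_lt_two).mul_left _)) (by norm_num)
    _ = _ := by rw [tsum_mul_left]; ring

lemma intervalIntegral_pow_four_le {f : ℝ → ℝ} (hf : Continuous f) :
    (∫ z in (1 : ℝ)..2, f z) ^ 4 ≤ ∫ z in (1 : ℝ)..2, f z ^ 4 := by
  have : MeasureTheory.IsProbabilityMeasure (MeasureTheory.volume.restrict (Set.Ioc (1 : ℝ) 2)) :=
    ⟨by norm_num [Real.volume_Ioc]⟩
  simp only [intervalIntegral.integral_of_le one_le_two]
  have hIoc {g : ℝ → ℝ} (hg : Continuous g) : MeasureTheory.IntegrableOn g (Set.Ioc 1 2) :=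
    hg.integrableOn_Ioc
  exact (Even.convexOn_pow (by decide : Even 4)).map_integral_le (continuous_pow 4).continuousOn
    isClosed_univ (Filter.Eventually.of_forall fun _ => Set.mem_univ _) (hIoc hf) (hIoc (hf.pow 4))

lemma continuous_intervalIntegral_snd {G : ℝ → ℝ → ℝ} (hG : Continuous (Function.uncurry G)) :
    Continuous fun z => ∫ ζ in (1 : ℝ)..2, G z ζ :=
  intervalIntegral.continuous_parametric_intervalIntegral_of_continuous' hG _ _

lemma integral_add_integral_le {f : ℝ → ℝ} {G : ℝ → ℝ → ℝ} {R S : ℝ} (hf : Continuous f)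
    (hG : Continuous (Function.uncurry G)) (hfR : ∫ z in (1 : ℝ)..2, f z ≤ R)
    (hGS : ∀ ζ ∈ Set.Icc (1 : ℝ) 2, ∫ z in (1 : ℝ)..2, G z ζ ≤ S) :
    ∫ z in (1 : ℝ)..2, (f z + ∫ ζ in (1 : ℝ)..2, G z ζ) ≤ R + S := by
  have hswap : ∫ z in (1 : ℝ)..2, ∫ ζ in (1 : ℝ)..2, G z ζ =
      ∫ ζ in (1 : ℝ)..2, ∫ z in (1 : ℝ)..2, G z ζ :=
    MeasureTheory.intervalIntegral_intervalIntegral_swap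
      ((hG.continuousOn.integrableOn_compact (isCompact_uIcc.prod isCompact_uIcc)).mono_set
        (Set.prod_mono Set.uIoc_subset_uIcc Set.uIoc_subset_uIcc))
  have hG' : Continuous (Function.uncurry fun ζ z => G z ζ) := hG.comp continuous_swap
  rw [intervalIntegral.integral_add (hf.intervalIntegrable _ _)
    ((continuous_intervalIntegral_snd hG).intervalIntegrable _ _), hswap]
  refine add_le_add hfR ?_
  calc ∫ ζ in (1 : ℝ)..2, ∫ z in (1 : ℝ)..2, G z ζ ≤ ∫ _ζ in (1 : ℝ)..2, S :=
        intervalIntegral.integral_mono_on one_le_two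
          ((continuous_intervalIntegral_snd hG').intervalIntegrable _ _) (by simp) hGS
    _ = S := by
        rw [intervalIntegral.integral_const, smul_eq_mul]
        ring

section Amplitude

variable {u u' : ι → ℝ → ℂ}

lemma norm_sum_amplitude_pow_four_le (hu : ∀ m z, HasDerivAt (u m) (u' m z) z)
    (hu' : ∀ m, Continuous (u' m)) (A : Finset ι) (c : ι → ℂ) {z : ℝ} (hz : z ∈ Set.Icc (1 : ℝ) 2) :
    ‖∑ m ∈ A, u m z * c m‖ ^ 4 ≤
      8 * (‖∑ m ∈ A, u m 1 * c m‖ ^ 4 + ∫ ζ in (1 : ℝ)..2, ‖∑ m ∈ A, u' m ζ * c m‖ ^ 4) := by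
  have hcont : Continuous fun ζ => ‖∑ m ∈ A, u' m ζ * c m‖ := by fun_prop
  have hftc : ∑ m ∈ A, u m z * c m =
      ∑ m ∈ A, u m 1 * c m + ∫ ζ in (1 : ℝ)..z, ∑ m ∈ A, u' m ζ * c m := by
    rw [intervalIntegral.integral_finsetSum
      (fun m _ => Continuous.intervalIntegrable (by fun_prop) _ _), ← Finset.sum_add_distrib]
    refine Finset.sum_congr rfl fun m _ => ?_
    rw [intervalIntegral.integral_mul_const, intervalIntegral.integral_eq_sub_of_hasDerivAt
      (fun ζ _ => hu m ζ) ((hu' m).intervalIntegrable _ _)]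
    ring
  have htail : ‖∫ ζ in (1 : ℝ)..z, ∑ m ∈ A, u' m ζ * c m‖ ≤
      ∫ ζ in (1 : ℝ)..2, ‖∑ m ∈ A, u' m ζ * c m‖ :=
    (intervalIntegral.norm_integral_le_integral_norm hz.1).trans <|
      intervalIntegral.integral_mono_interval le_rfl hz.1 hz.2
        (Filter.Eventually.of_forall fun ζ => norm_nonneg _) (hcont.intervalIntegrable _ _)
  calc ‖∑ m ∈ A, u m z * c m‖ ^ 4
      ≤ (‖∑ m ∈ A, u m 1 * c m‖ + ∫ ζ in (1 : ℝ)..2, ‖∑ m ∈ A, u' m ζ * c m‖) ^ 4 := by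
        rw [hftc]
        gcongr
        exact (norm_add_le _ _).trans (add_le_add_right htail _)
    _ ≤ 2 ^ (4 - 1) * (‖∑ m ∈ A, u m 1 * c m‖ ^ 4 +
          (∫ ζ in (1 : ℝ)..2, ‖∑ m ∈ A, u' m ζ * c m‖) ^ 4) :=
        add_pow_le (norm_nonneg _) ((norm_nonneg _).trans htail) 4
    _ ≤ 8 * (‖∑ m ∈ A, u m 1 * c m‖ ^ 4 + ∫ ζ in (1 : ℝ)..2, ‖∑ m ∈ A, u' m ζ * c m‖ ^ 4) := by
        norm_num
        exact intervalIntegral_pow_four_le hcont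

lemma integral_norm_sum_amplitude_pow_four_le {B R : ℝ}
    (hR : ∀ b : ι → ℂ, (∀ m ∈ A, ‖b m‖ ≤ B) →
      ∫ z in (1 : ℝ)..2, ‖∑ m ∈ A, b m * osc (z * t m)‖ ^ 4 ≤ R)
    (hu : ∀ m z, HasDerivAt (u m) (u' m z) z) (hu' : ∀ m, Continuous (u' m))
    (hB : ∀ m ∈ A, ‖u m 1‖ ≤ B) (hB' : ∀ m ∈ A, ∀ ζ ∈ Set.Icc (1 : ℝ) 2, ‖u' m ζ‖ ≤ B) :
    ∫ z in (1 : ℝ)..2, ‖∑ m ∈ A, u m z * osc (z * t m)‖ ^ 4 ≤ 16 * R := by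
  have huc (m : ι) : Continuous (u m) :=
    continuous_iff_continuousAt.2 fun z => (hu m z).continuousAt
  have hGc : Continuous (Function.uncurry fun z ζ => ‖∑ m ∈ A, u' m ζ * osc (z * t m)‖ ^ 4) := by
    unfold Function.uncurry
    fun_prop
  calc ∫ z in (1 : ℝ)..2, ‖∑ m ∈ A, u m z * osc (z * t m)‖ ^ 4
      ≤ ∫ z in (1 : ℝ)..2, 8 * (‖∑ m ∈ A, u m 1 * osc (z * t m)‖ ^ 4 +
          ∫ ζ in (1 : ℝ)..2, ‖∑ m ∈ A, u' m ζ * osc (z * t m)‖ ^ 4) :=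
        intervalIntegral.integral_mono_on one_le_two
          (Continuous.intervalIntegrable (by fun_prop) _ _)
          (((Continuous.add (by fun_prop) (continuous_intervalIntegral_snd hGc)).const_mul
            8).intervalIntegrable _ _)
          fun z hz => norm_sum_amplitude_pow_four_le hu hu' A _ hz
    _ ≤ 8 * (R + R) := by
        rw [intervalIntegral.integral_const_mul]
        gcongr
        exact integral_add_integral_le (by fun_prop) hGc (hR _ hB)
          fun ζ hζ => hR (fun m => u' m ζ) fun m hm => hB' m hm ζ hζ
    _ = 16 * R := by ring

end Amplitude

end FourthMoment

/-! ### From the dual count to a fourth moment -/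

/-- The number of quadruples of integers in `[a N, b N]` for which the gap of the normalised powers
`(n / N) ^ α` is less than `δ` in absolute value. -/
noncomputable def quadCount (α a b N δ : ℝ) : ℕ :=
  ((quads (Finset.Icc ⌈a * N⌉₊ ⌊b * N⌋₊)).filter
    fun q => |quadGap (fun n : ℕ => ((n : ℝ) / N) ^ α) q| < δ).card

/-- The bound `N ^ 4 δ + N ^ 2` for `quadCount` up to a loss of `N ^ κ`, uniformly in the real
scale `N` and in `δ`, for each fixed window `[a, b]`. -/
def CountBound (α κ : ℝ) : Prop :=
  ∀ a b : ℝ, 0 < a → a < b → ∃ C : ℝ, 0 < C ∧ ∀ N δ : ℝ, 0 < N → 0 < δ →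
    (quadCount α a b N δ : ℝ) ≤ C * N ^ κ * (N ^ 4 * δ + N ^ 2)

lemma card_filter_quadGap_const_mul (β a b M : ℝ) {c : ℝ} (hc : c ≠ 0) (δ : ℝ) :
    ((quads (Finset.Icc ⌈a * M⌉₊ ⌊b * M⌋₊)).filter
      fun q => |quadGap (fun m : ℕ => c * ((m : ℝ) / M) ^ β) q| < δ).card =
      quadCount β a b M (δ / |c|) := by
  simp only [quadCount, quadGap_const_mul, abs_mul, lt_div_iff₀' (abs_pos.2 hc)]

lemma CountBound.exists_fourth_moment_le {β κ a b θ : ℝ} (h : CountBound β κ) (ha : 0 < a)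
    (hab : a < b) (hθ : θ ≠ 0) :
    ∃ C : ℝ, 0 ≤ C ∧ ∀ Y M B : ℝ, 0 < Y → 0 < M → ∀ c : ℕ → ℂ,
      (∀ m ∈ Finset.Icc ⌈a * M⌉₊ ⌊b * M⌋₊, ‖c m‖ ≤ B) →
      ∫ z in (1 : ℝ)..2, ‖∑ m ∈ Finset.Icc ⌈a * M⌉₊ ⌊b * M⌋₊,
        c m * osc (z * (Y * θ * ((m : ℝ) / M) ^ β))‖ ^ 4 ≤
      C * (B ^ 4 * (M ^ κ * (M ^ 4 / Y + M ^ 2))) := by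
  obtain ⟨C, hC, hcount⟩ := h a b ha hab
  set S := 100 * ∑' j : ℕ, (((j : ℝ) + 1) ^ 2)⁻¹
  refine ⟨exp 4 * √π * S * (C * (1 / |θ| + 1)), by positivity, fun Y M B hY hM c hc => ?_⟩
  have hlevel (j : ℕ) : (((quads (Finset.Icc ⌈a * M⌉₊ ⌊b * M⌋₊)).filter
      fun q => |quadGap (fun m : ℕ => Y * θ * ((m : ℝ) / M) ^ β) q| < j + 1).card : ℝ) ≤
      C * M ^ κ * ((1 / |θ| + 1) * (M ^ 4 / Y + M ^ 2)) * (j + 1) := by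
    rw [card_filter_quadGap_const_mul β a b M (mul_ne_zero hY.ne' hθ), abs_mul, abs_of_pos hY]
    refine (hcount M _ hM (by positivity)).trans ?_
    rw [mul_assoc _ _ ((j : ℝ) + 1)]
    refine mul_le_mul_of_nonneg_left ?_ (by positivity)
    have hexpand : (1 / |θ| + 1) * (M ^ 4 / Y + M ^ 2) * ((j : ℝ) + 1) =
        M ^ 4 * ((j + 1) / (Y * |θ|)) + M ^ 2 +
          (M ^ 2 * j + M ^ 2 / |θ| * (j + 1) + M ^ 4 / Y * (j + 1)) := by
      field_simp
      ring
    rw [hexpand]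
    exact le_add_of_nonneg_right (by positivity)
  calc _ ≤ exp 4 * (√π * B ^ 4 *
        (S * (C * M ^ κ * ((1 / |θ| + 1) * (M ^ 4 / Y + M ^ 2))))) := by
        refine (integral_norm_sum_pow_four_le _ hc).trans ?_
        gcongr
        exact sum_exp_neg_sq_le hlevel
    _ = exp 4 * √π * S * (C * (1 / |θ| + 1)) * (B ^ 4 * (M ^ κ * (M ^ 4 / Y + M ^ 2))) := by ring

section SmoothSum

variable {ω : ℝ → ℝ} {α s₀ s₁ κ : ℝ}

/- Moving the stationary point `log ν / (α - 1)` to the origin: the value of the phase there is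
linear in `z`, which is what the substitution `y = Y z ^ (1 - α)` is designed for. -/
lemma dualIntegral_eq_statAmp_mul_osc (hα1 : α ≠ 1) (ω : ℝ → ℝ) (s₀ s₁ Y z : ℝ) {ν : ℝ}
    (hν : 0 < ν) :
    dualIntegral ω α s₀ s₁ Y ν z = statAmp ω α s₀ s₁ Y (log ν / (α - 1)) z *
      osc (z * (Y * (1 - α) * ν ^ (α / (α - 1)))) := by
  have hγ : α - 1 ≠ 0 := sub_ne_zero.2 hα1
  set σ := log ν / (α - 1) with hσ
  have hνσ : ν = exp ((α - 1) * σ) := by rw [hσ, mul_div_cancel₀ _ hγ, exp_log hν]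
  have hpow : ν ^ (α / (α - 1)) = exp (α * σ) := by
    rw [rpow_def_of_pos hν, hσ]
    ring_nf
  rw [dualIntegral, statAmp, hpow, ← intervalIntegral.integral_mul_const]
  refine intervalIntegral.integral_congr fun s _ => ?_
  have hphase : Y * z * dualPhase α ν 0 s =
      Y * z * exp (α * σ) * modelPhase α (s - σ) + z * (Y * (1 - α) * exp (α * σ)) := by
    have h₁ : exp (α * s) = exp (α * σ) * exp (α * (s - σ)) := by rw [← exp_add]; ring_nf
    have h₂ : ν * exp s = exp (α * σ) * exp (s - σ) := by
      rw [hνσ, ← exp_add, ← exp_add]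
      ring_nf
    rw [modelPhase, dualPhase, h₁, pow_zero]
    linear_combination (-Y * z * α) * h₂
  rw [hphase, osc_add]
  ring

lemma log_div_mem_Icc {γ W x : ℝ} (hx : 0 < W) (hxW : x ∈ Set.Icc W⁻¹ W) :
    log x / γ ∈ Set.Icc (-(log W / |γ|)) (log W / |γ|) := by
  have hx0 : 0 < x := (inv_pos.2 hx).trans_le hxW.1
  rw [Set.mem_Icc, ← abs_le, abs_div]
  gcongr
  rw [abs_le, ← log_inv]
  exact ⟨log_le_log (inv_pos.2 hx) hxW.1, log_le_log hx0 hxW.2⟩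

lemma IsWeight.exists_sum_dualIntegral_moment_le (hω : IsWeight ω s₀ s₁) (hα0 : α ≠ 0)
    (hα1 : α ≠ 1) (hκ : CountBound (α / (α - 1)) κ) :
    ∃ C : ℝ, 0 ≤ C ∧ ∀ Y M : ℝ, 0 < Y → 0 < M →
      ∫ z in (1 : ℝ)..2, ‖∑ m ∈ dualRange α s₀ s₁ M, dualIntegral ω α s₀ s₁ Y (m / M) z‖ ^ 4 ≤
        C * (M ^ κ * (M ^ 4 / Y + M ^ 2) / Y ^ 2) := by
  set W := dualWindow α s₀ s₁
  have hW : 2 ≤ W := two_le_dualWindow α s₀ s₁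
  have hW0 : 0 < W := two_pos.trans_le hW
  obtain ⟨C₁, -, hamp⟩ := hω.exists_statAmp_bound hα0 hα1 (log W / |α - 1|)
  obtain ⟨C₂, _, hdual⟩ := hκ.exists_fourth_moment_le (inv_pos.2 hW0)
    ((inv_le_one_of_one_le₀ (one_le_two.trans hW)).trans_lt (one_lt_two.trans_le hW))
    (sub_ne_zero.2 hα1.symm)
  refine ⟨16 * C₂ * C₁ ^ 4, by positivity, fun Y M hY hM => ?_⟩
  have hmem {m : ℕ} (hm : m ∈ dualRange α s₀ s₁ M) := div_mem_of_mem_dualRange hM hm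
  have hσ {m : ℕ} (hm : m ∈ dualRange α s₀ s₁ M) := log_div_mem_Icc (γ := α - 1) hW0 (hmem hm)
  have hsqrt : (√Y) ^ 4 = Y ^ 2 := by rw [pow_mul (√Y) 2 2, sq_sqrt hY.le]
  calc _ = ∫ z in (1 : ℝ)..2, ‖∑ m ∈ dualRange α s₀ s₁ M,
          statAmp ω α s₀ s₁ Y (log (m / M) / (α - 1)) z *
            osc (z * (Y * (1 - α) * ((m : ℝ) / M) ^ (α / (α - 1))))‖ ^ 4 := by
        refine intervalIntegral.integral_congr fun z _ => ?_
        congr 2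
        exact Finset.sum_congr rfl fun m hm => dualIntegral_eq_statAmp_mul_osc hα1 ω s₀ s₁ Y z
          ((inv_pos.2 hW0).trans_le (hmem hm).1)
    _ ≤ 16 * (C₂ * ((C₁ / √Y) ^ 4 * (M ^ κ * (M ^ 4 / Y + M ^ 2)))) :=
        integral_norm_sum_amplitude_pow_four_le (hdual Y M _ hY hM)
          (fun m => hω.hasDerivAt_statAmp α Y _) (fun m => hω.continuous_statAmpDeriv α Y _)
          (fun m hm => (hamp Y hY 1 ⟨le_rfl, one_le_two⟩ _ (hσ hm)).1)
          (fun m hm ζ hζ => (hamp Y hY ζ hζ _ (hσ hm)).2)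
    _ = 16 * C₂ * C₁ ^ 4 * (M ^ κ * (M ^ 4 / Y + M ^ 2) / Y ^ 2) := by
        rw [div_pow, hsqrt]
        ring

@[fun_prop] lemma continuous_smoothSum (ω : ℝ → ℝ) (α s₁ N : ℝ) :
    Continuous (smoothSum ω α s₁ N) := by
  unfold smoothSum
  fun_prop

lemma IsWeight.continuous_dualIntegral (hω : IsWeight ω s₀ s₁) (α Y ν : ℝ) :
    Continuous (dualIntegral ω α s₀ s₁ Y ν) := by
  have := hω.continuous
  unfold dualIntegral
  refine intervalIntegral.continuous_parametric_intervalIntegral_of_continuous' ?_ _ _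
  unfold logWeight dualPhase
  fun_prop

lemma integral_pow_four_le_of_le_mul_add {f g : ℝ → ℝ} {A E : ℝ}
    (hf : ContinuousOn f (Set.Icc 1 2)) (hg : Continuous g) (hf0 : ∀ z, 0 ≤ f z)
    (hg0 : ∀ z, 0 ≤ g z) (hA : 0 ≤ A) (hE : 0 ≤ E)
    (h : ∀ z ∈ Set.Icc (1 : ℝ) 2, f z ≤ A * g z + E) :
    ∫ z in (1 : ℝ)..2, f z ^ 4 ≤ 8 * (A ^ 4 * (∫ z in (1 : ℝ)..2, g z ^ 4) + E ^ 4) := by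
  have hint : IntervalIntegrable (fun z => A ^ 4 * g z ^ 4) MeasureTheory.volume 1 2 :=
    Continuous.intervalIntegrable (by fun_prop) _ _
  calc ∫ z in (1 : ℝ)..2, f z ^ 4 ≤ ∫ z in (1 : ℝ)..2, 8 * (A ^ 4 * g z ^ 4 + E ^ 4) := by
        refine intervalIntegral.integral_mono_on one_le_two
          ((hf.pow 4).intervalIntegrable_of_Icc one_le_two)
          ((hint.add intervalIntegrable_const).const_mul 8) fun z hz => ?_
        calc f z ^ 4 ≤ (A * g z + E) ^ 4 := pow_le_pow_left₀ (hf0 z) (h z hz) 4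
          _ ≤ 2 ^ (4 - 1) * ((A * g z) ^ 4 + E ^ 4) := add_pow_le (mul_nonneg hA (hg0 z)) hE 4
          _ = 8 * (A ^ 4 * g z ^ 4 + E ^ 4) := by ring
    _ = 8 * (A ^ 4 * (∫ z in (1 : ℝ)..2, g z ^ 4) + E ^ 4) := by
        rw [intervalIntegral.integral_const_mul,
          intervalIntegral.integral_add hint intervalIntegrable_const,
          intervalIntegral.integral_const_mul, intervalIntegral.integral_const]
        norm_num

lemma dual_scale_moment_eq {N Y c : ℝ} (hN : 0 < N) (hY : 0 < Y) (hc : 0 < c) (κ : ℝ) :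
    N ^ 4 * ((c * (Y / N)) ^ κ * ((c * (Y / N)) ^ 4 / Y + (c * (Y / N)) ^ 2) / Y ^ 2) =
      c ^ κ * ((Y / N) ^ κ * (c ^ 4 * Y + c ^ 2 * N ^ 2)) := by
  rw [mul_rpow hc.le (by positivity)]
  field_simp

lemma continuousOn_smoothSum_rpow (ω : ℝ → ℝ) (α s₁ N Y : ℝ) :
    ContinuousOn (fun z : ℝ => smoothSum ω α s₁ N (Y * z ^ (1 - α))) (Set.Icc 1 2) := by
  refine (continuous_smoothSum ω α s₁ N).comp_continuousOn (continuousOn_const.mul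
    (continuousOn_id.rpow_const fun z hz => Or.inl ?_))
  exact (zero_lt_one.trans_le hz.1).ne'

lemma IsWeight.exists_smoothSum_moment_le_dual (hω : IsWeight ω s₀ s₁) (hα0 : α ≠ 0) :
    ∃ C : ℝ, 0 ≤ C ∧ ∀ N Y M : ℝ, 0 < N → 0 < Y → |α| * Y = 2 * π * N * M →
      ∫ z in (1 : ℝ)..2, ‖smoothSum ω α s₁ N (Y * z ^ (1 - α))‖ ^ 4 ≤
        8 * ((2 * N) ^ 4 * (∫ z in (1 : ℝ)..2,
          ‖∑ m ∈ dualRange α s₀ s₁ M, dualIntegral ω α s₀ s₁ Y (m / M) z‖ ^ 4) +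
          (C * (N / Y ^ 2 + 1 / N)) ^ 4) := by
  obtain ⟨C, hC, hpoisson⟩ := hω.exists_norm_smoothSum_sub_le hα0
  refine ⟨C, hC, fun N Y M hN hY hM => ?_⟩
  refine integral_pow_four_le_of_le_mul_add (continuousOn_smoothSum_rpow ω α s₁ N Y).norm
    (continuous_finsetSum _ fun m _ => hω.continuous_dualIntegral _ _ _).norm
    (fun z => norm_nonneg _) (fun z => norm_nonneg _) (by positivity) (by positivity)
    fun z hz => ?_
  refine (norm_le_norm_add_norm_sub' _ _).trans (add_le_add ?_ (hpoisson N Y M hN hY hM z hz))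
  rw [norm_mul, norm_mul, Complex.norm_of_nonneg hN.le,
    Complex.norm_of_nonneg (zero_le_one.trans hz.1), mul_comm N]
  gcongr
  exact hz.2

lemma IsWeight.exists_smoothSum_moment_le (hω : IsWeight ω s₀ s₁) (hα0 : α ≠ 0)
    (hα1 : α ≠ 1) (hκ : CountBound (α / (α - 1)) κ) :
    ∃ C : ℝ, 0 ≤ C ∧ ∀ N Y : ℝ, 0 < N → 0 < Y →
      ∫ z in (1 : ℝ)..2, ‖smoothSum ω α s₁ N (Y * z ^ (1 - α))‖ ^ 4 ≤
        C * ((Y / N) ^ κ * (Y + N ^ 2) + (N / Y ^ 2 + 1 / N) ^ 4) := by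
  obtain ⟨C₁, hC₁, hdual⟩ := hω.exists_sum_dualIntegral_moment_le hα0 hα1 hκ
  obtain ⟨C₂, -, hpoisson⟩ := hω.exists_smoothSum_moment_le_dual hα0
  set c := |α| / (2 * π) with hc_def
  have hc : 0 < c := div_pos (abs_pos.2 hα0) two_pi_pos
  refine ⟨8 * (16 * C₁ * c ^ κ * (c ^ 4 + c ^ 2) + C₂ ^ 4), by positivity, fun N Y hN hY => ?_⟩
  have hscale : |α| * Y = 2 * π * N * (c * (Y / N)) := by
    rw [hc_def]
    field_simp
  calc _ ≤ 8 * ((2 * N) ^ 4 * (C₁ * ((c * (Y / N)) ^ κ * ((c * (Y / N)) ^ 4 / Y +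
          (c * (Y / N)) ^ 2) / Y ^ 2)) + (C₂ * (N / Y ^ 2 + 1 / N)) ^ 4) := by
        refine (hpoisson N Y _ hN hY hscale).trans ?_
        gcongr
        exact hdual Y _ hY (by positivity)
    _ = 8 * (16 * C₁ * (c ^ κ * ((Y / N) ^ κ * (c ^ 4 * Y + c ^ 2 * N ^ 2))) +
          C₂ ^ 4 * (N / Y ^ 2 + 1 / N) ^ 4) := by
        rw [← dual_scale_moment_eq hN hY hc]
        ring
    _ ≤ _ := by
        rw [← sub_nonneg]
        ring_nf
        positivity

end SmoothSum

/-! ### The fourth moment over a long interval -/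

section LongInterval

variable {g : ℝ → ℝ}

lemma abs_integral_le_mul_integral_comp_rpow (hg : Continuous g) (hg0 : ∀ y, 0 ≤ g y) (γ : ℝ)
    {Y : ℝ} (hY : 0 < Y) :
    |∫ y in Y..Y * 2 ^ γ, g y| ≤ |γ| * 2 ^ |γ| * Y * ∫ z in (1 : ℝ)..2, g (Y * z ^ γ) := by
  have hIcc : Set.uIcc (1 : ℝ) 2 = Set.Icc 1 2 := Set.uIcc_of_le one_le_two
  have hne {z : ℝ} (hz : z ∈ Set.Icc (1 : ℝ) 2) : z ≠ 0 := (zero_lt_one.trans_le hz.1).ne'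
  have hrpow (p : ℝ) : ContinuousOn (fun z : ℝ => z ^ p) (Set.Icc 1 2) :=
    continuousOn_id.rpow_const fun z hz => Or.inl (hne hz)
  have hcomp : ContinuousOn (fun z : ℝ => g (Y * z ^ γ)) (Set.Icc 1 2) :=
    hg.comp_continuousOn (continuousOn_const.mul (hrpow γ))
  have hjac : ContinuousOn (fun z : ℝ => Y * (γ * z ^ (γ - 1))) (Set.Icc 1 2) :=
    continuousOn_const.mul (continuousOn_const.mul (hrpow _))
  have hsubst := intervalIntegral.integral_deriv_smul_comp (f := fun z => Y * z ^ γ) (g := g)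
    (fun z hz => (hasDerivAt_rpow_const (Or.inl (hne (hIcc ▸ hz)))).const_mul Y) (hIcc ▸ hjac) hg
  rw [one_rpow, mul_one] at hsubst
  rw [← hsubst, ← intervalIntegral.integral_const_mul, ← Real.norm_eq_abs]
  refine intervalIntegral.norm_integral_le_of_norm_le one_le_two
    (Filter.Eventually.of_forall fun z hz => ?_)
    ((continuousOn_const.mul hcomp).intervalIntegrable_of_Icc one_le_two)
  have hz1 : 1 ≤ z := hz.1.le
  have hpow : z ^ (γ - 1) ≤ 2 ^ |γ| :=
    calc z ^ (γ - 1) ≤ z ^ |γ| :=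
          rpow_le_rpow_of_exponent_le hz1 (by linarith [le_abs_self γ])
      _ ≤ 2 ^ |γ| := rpow_le_rpow (by positivity) hz.2 (abs_nonneg γ)
  rw [Function.comp_apply, norm_smul, Real.norm_of_nonneg (hg0 _), norm_mul, norm_mul,
    Real.norm_of_nonneg hY.le,
    Real.norm_of_nonneg (by positivity : 0 ≤ z ^ (γ - 1)), Real.norm_eq_abs]
  refine mul_le_mul_of_nonneg_right ?_ (hg0 _)
  calc Y * (|γ| * z ^ (γ - 1)) ≤ Y * (|γ| * 2 ^ |γ|) := by gcongr
    _ = |γ| * 2 ^ |γ| * Y := by ring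

lemma exists_integral_le_mul_integral_comp_rpow (hg : Continuous g) (hg0 : ∀ y, 0 ≤ g y) (γ : ℝ)
    {Y : ℝ} (hY : 0 < Y) :
    ∃ Y' ∈ Set.Icc Y (2 ^ |γ| * Y), ∫ y in Y..2 ^ |γ| * Y, g y ≤
      |γ| * 2 ^ |γ| * Y' * ∫ z in (1 : ℝ)..2, g (Y' * z ^ γ) := by
  have hle : Y ≤ 2 ^ |γ| * Y :=
    le_mul_of_one_le_left hY.le (one_le_rpow one_le_two (abs_nonneg γ))
  rcases le_total 0 γ with hγ | hγ
  · refine ⟨Y, Set.left_mem_Icc.2 hle, ?_⟩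
    have := abs_integral_le_mul_integral_comp_rpow hg hg0 γ hY
    rw [mul_comm (2 ^ |γ|), abs_of_nonneg hγ] at *
    exact (le_abs_self _).trans this
  · refine ⟨2 ^ |γ| * Y, Set.right_mem_Icc.2 hle, ?_⟩
    have := abs_integral_le_mul_integral_comp_rpow hg hg0 γ (hY.trans_le hle)
    have hback : 2 ^ |γ| * Y * 2 ^ γ = Y := by
      rw [mul_right_comm, ← rpow_add two_pos, abs_of_nonpos hγ, neg_add_cancel, rpow_zero, one_mul]
    rw [hback, intervalIntegral.integral_symm, abs_neg] at this
    exact (le_abs_self _).trans this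

/- The block bound `A * Y + B / Y` is the increment from `Y` to `ρ * Y` of
`A * Y / (ρ - 1) - B * ρ / ((ρ - 1) * Y)`, so the blocks telescope. -/
lemma integral_one_le_of_block_le (hg : Continuous g) (hg0 : ∀ y, 0 ≤ g y) {ρ A B T : ℝ}
    (hρ : 1 < ρ) (hA : 0 ≤ A) (hB : 0 ≤ B) (hT : 1 ≤ T)
    (hblock : ∀ Y, 1 ≤ Y → Y ≤ T → ∫ y in Y..ρ * Y, g y ≤ A * Y + B / Y) :
    ∫ y in (1 : ℝ)..T, g y ≤ ρ / (ρ - 1) * (A * T + B) := by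
  have hρ0 : 0 < ρ := one_pos.trans hρ
  have hρ1 : 0 < ρ - 1 := sub_pos.2 hρ
  have htelescope (n : ℕ) (hn : ρ ^ n ≤ ρ * T) : ∫ y in (1 : ℝ)..ρ ^ n, g y ≤
      (A * ρ ^ n - B * ρ / ρ ^ n + B * ρ - A) / (ρ - 1) := by
    induction n with
    | zero => simp
    | succ n ih =>
      have hT' : ρ ^ n ≤ T := by rwa [pow_succ', mul_le_mul_iff_right₀ hρ0] at hn
      rw [← intervalIntegral.integral_add_adjacent_intervals (hg.intervalIntegrable 1 (ρ ^ n))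
        (hg.intervalIntegrable _ _), pow_succ']
      refine (add_le_add (ih (hT'.trans (le_mul_of_one_le_left (by positivity) hρ.le)))
        (hblock _ (one_le_pow₀ hρ.le) hT')).trans_eq ?_
      field_simp
      ring
  obtain ⟨n, hn, hnT⟩ := exists_nat_pow_near hT hρ
  have hn' : ρ ^ (n + 1) ≤ ρ * T := by rw [pow_succ']; gcongr
  calc ∫ y in (1 : ℝ)..T, g y ≤ ∫ y in (1 : ℝ)..ρ ^ (n + 1), g y :=
        intervalIntegral.integral_mono_interval le_rfl hT hnT.le
          (Filter.Eventually.of_forall hg0) (hg.intervalIntegrable _ _)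
    _ ≤ (A * ρ ^ (n + 1) - B * ρ / ρ ^ (n + 1) + B * ρ - A) / (ρ - 1) := htelescope _ hn'
    _ ≤ (A * (ρ * T) + B * ρ) / (ρ - 1) := by
        have : 0 ≤ B * ρ / ρ ^ (n + 1) := by positivity
        gcongr ?_ / _
        linarith [mul_le_mul_of_nonneg_left hn' hA]
    _ = ρ / (ρ - 1) * (A * T + B) := by ring

end LongInterval

section SmoothSum

variable {ω : ℝ → ℝ} {α s₀ s₁ κ : ℝ}

lemma norm_smoothSum_le (hω1 : ∀ x, |ω x| ≤ 1) (α s₁ : ℝ) {N : ℝ} (hN : 1 ≤ N) (y : ℝ) :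
    ‖smoothSum ω α s₁ N y‖ ≤ (exp s₁ + 1) * N := by
  have hterm : ‖smoothSum ω α s₁ N y‖ ≤
      ∑ _n ∈ Finset.range (⌊exp s₁ * N⌋₊ + 1), (1 : ℝ) := by
    refine norm_sum_le_of_le _ fun _ _ => ?_
    rw [norm_mul, norm_osc, mul_one, Complex.norm_real]
    exact hω1 _
  rw [Finset.sum_const, Finset.card_range, nsmul_one] at hterm
  push_cast at hterm
  linarith [Nat.floor_le (by positivity : 0 ≤ exp s₁ * N)]

lemma dual_block_bound {N T Y Y' ρ κ : ℝ} (hκ : 0 ≤ κ) (hN : 1 ≤ N) (hρ : 1 ≤ ρ) (hY : 1 ≤ Y)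
    (hYT : Y ≤ T) (hTN : T ≤ N ^ 2) (hY' : Y' ∈ Set.Icc Y (ρ * Y)) :
    Y' * ((Y' / N) ^ κ * (Y' + N ^ 2) + (N / Y' ^ 2 + 1 / N) ^ 4) ≤
      16 * ρ ^ 2 * ρ ^ κ * (N ^ 2 * (T / N) ^ κ * Y + N ^ 4 / Y) := by
  have hN0 : 0 < N := one_pos.trans_le hN
  have hY0 : 0 < Y := one_pos.trans_le hY
  have hY'0 : 0 < Y' := hY0.trans_le hY'.1
  have hT0 : 0 < T := hY0.trans_le hYT
  have hρκ : 1 ≤ ρ ^ κ := one_le_rpow hρ hκ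
  have hpow : (Y' / N) ^ κ ≤ ρ ^ κ * (T / N) ^ κ := by
    rw [← mul_rpow (by positivity) (by positivity), ← mul_div_assoc]
    have : Y' ≤ ρ * T := hY'.2.trans (by gcongr)
    gcongr
  have hsum : Y' + N ^ 2 ≤ 2 * ρ * N ^ 2 :=
    calc Y' + N ^ 2 ≤ ρ * N ^ 2 + ρ * N ^ 2 := by
          gcongr
          · exact hY'.2.trans (by gcongr; exact hYT.trans hTN)
          · exact le_mul_of_one_le_left (by positivity) hρ
      _ = 2 * ρ * N ^ 2 := by ring
  have herr : N / Y' ^ 2 + 1 / N ≤ 2 * (N / Y) := by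
    have h₁ : N / Y' ^ 2 ≤ N / Y := by
      gcongr
      nlinarith [hY'.1]
    have h₂ : 1 / N ≤ N / Y := by
      rw [div_le_div_iff₀ hN0 hY0]
      nlinarith
    linarith
  have hcube : Y * (N / Y) ^ 4 ≤ N ^ 4 / Y := by
    calc Y * (N / Y) ^ 4 = N ^ 4 / Y ^ 3 := by field_simp
      _ ≤ N ^ 4 / Y := by gcongr; exact le_self_pow₀ hY (by norm_num)
  have hfac : ρ ≤ ρ ^ 2 * ρ ^ κ := by nlinarith [mul_le_mul hρ hρκ zero_le_one (by positivity)]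
  calc Y' * ((Y' / N) ^ κ * (Y' + N ^ 2) + (N / Y' ^ 2 + 1 / N) ^ 4)
      ≤ ρ * Y * (ρ ^ κ * (T / N) ^ κ * (2 * ρ * N ^ 2) + (2 * (N / Y)) ^ 4) := by
        gcongr
        exact hY'.2
    _ = 2 * ρ ^ 2 * ρ ^ κ * (N ^ 2 * (T / N) ^ κ * Y) + 16 * ρ * (Y * (N / Y) ^ 4) := by ring
    _ ≤ 16 * ρ ^ 2 * ρ ^ κ * (N ^ 2 * (T / N) ^ κ * Y) +
          16 * (ρ ^ 2 * ρ ^ κ) * (N ^ 4 / Y) := by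
        gcongr
        norm_num
    _ = 16 * ρ ^ 2 * ρ ^ κ * (N ^ 2 * (T / N) ^ κ * Y + N ^ 4 / Y) := by ring

lemma IsWeight.exists_smoothSum_block_le (hω : IsWeight ω s₀ s₁) (hα0 : α ≠ 0) (hα1 : α ≠ 1)
    (hκ0 : 0 ≤ κ) (hκ : CountBound (α / (α - 1)) κ) :
    ∃ C : ℝ, 0 ≤ C ∧ ∀ N T Y : ℝ, 1 ≤ N → T ≤ N ^ 2 → 1 ≤ Y → Y ≤ T →
      ∫ y in Y..2 ^ |1 - α| * Y, ‖smoothSum ω α s₁ N y‖ ^ 4 ≤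
        C * N ^ 2 * (T / N) ^ κ * Y + C * N ^ 4 / Y := by
  obtain ⟨C, hC, hmoment⟩ := hω.exists_smoothSum_moment_le hα0 hα1 hκ
  set ρ : ℝ := 2 ^ |1 - α|
  have hρ : 1 ≤ ρ := one_le_rpow one_le_two (abs_nonneg _)
  refine ⟨|1 - α| * ρ * C * (16 * ρ ^ 2 * ρ ^ κ), by positivity,
    fun N T Y hN hTN hY hYT => ?_⟩
  have hY0 : 0 < Y := one_pos.trans_le hY
  obtain ⟨Y', hY', hsubst⟩ := exists_integral_le_mul_integral_comp_rpow
    (g := fun y => ‖smoothSum ω α s₁ N y‖ ^ 4) (by fun_prop) (fun y => by positivity) (1 - α) hY0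
  have hY'0 : 0 < Y' := hY0.trans_le hY'.1
  calc _ ≤ |1 - α| * ρ * Y' *
          (C * ((Y' / N) ^ κ * (Y' + N ^ 2) + (N / Y' ^ 2 + 1 / N) ^ 4)) := by
        refine hsubst.trans (mul_le_mul_of_nonneg_left ?_ (by positivity))
        exact hmoment N Y' (one_pos.trans_le hN) hY'0
    _ = |1 - α| * ρ * C *
          (Y' * ((Y' / N) ^ κ * (Y' + N ^ 2) + (N / Y' ^ 2 + 1 / N) ^ 4)) := by ring
    _ ≤ |1 - α| * ρ * C * (16 * ρ ^ 2 * ρ ^ κ * (N ^ 2 * (T / N) ^ κ * Y + N ^ 4 / Y)) := by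
        refine mul_le_mul_of_nonneg_left ?_ (by positivity)
        exact dual_block_bound hκ0 hN hρ hY hYT hTN hY'
    _ = _ := by ring

lemma IsWeight.exists_integral_smoothSum_pow_four_le (hω : IsWeight ω s₀ s₁)
    (hω1 : ∀ x, |ω x| ≤ 1) (hα0 : α ≠ 0) (hα1 : α ≠ 1) (hκ0 : 0 ≤ κ)
    (hκ : CountBound (α / (α - 1)) κ) :
    ∃ C : ℝ, 0 ≤ C ∧ ∀ N T : ℝ, 1 ≤ N → 1 ≤ T → T ≤ N ^ 2 →
      ∫ y in (0 : ℝ)..T, ‖smoothSum ω α s₁ N y‖ ^ 4 ≤ C * (N ^ 4 + N ^ 2 * T * (T / N) ^ κ) := by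
  obtain ⟨C, hC, hblock⟩ := hω.exists_smoothSum_block_le hα0 hα1 hκ0 hκ
  set ρ : ℝ := 2 ^ |1 - α|
  have hρ : 1 < ρ := one_lt_rpow one_lt_two (abs_pos.2 (sub_ne_zero.2 hα1.symm))
  refine ⟨(exp s₁ + 1) ^ 4 + ρ / (ρ - 1) * C, by positivity, fun N T hN hT hTN => ?_⟩
  have hcont : Continuous fun y => ‖smoothSum ω α s₁ N y‖ ^ 4 := by fun_prop
  have hP : 0 ≤ N ^ 2 * T * (T / N) ^ κ := by positivity
  calc ∫ y in (0 : ℝ)..T, ‖smoothSum ω α s₁ N y‖ ^ 4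
      = (∫ y in (0 : ℝ)..1, ‖smoothSum ω α s₁ N y‖ ^ 4) +
          ∫ y in (1 : ℝ)..T, ‖smoothSum ω α s₁ N y‖ ^ 4 :=
        (intervalIntegral.integral_add_adjacent_intervals (hcont.intervalIntegrable 0 1)
          (hcont.intervalIntegrable 1 T)).symm
    _ ≤ (∫ y in (0 : ℝ)..1, ((exp s₁ + 1) * N) ^ 4) +
          ρ / (ρ - 1) * (C * N ^ 2 * (T / N) ^ κ * T + C * N ^ 4) := by
        refine add_le_add (intervalIntegral.integral_mono_on zero_le_one
          (hcont.intervalIntegrable _ _) intervalIntegrable_const fun y _ => ?_) ?_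
        · exact pow_le_pow_left₀ (norm_nonneg _) (norm_smoothSum_le hω1 α s₁ hN y) 4
        · exact integral_one_le_of_block_le hcont (fun y => by positivity) hρ (by positivity)
            (by positivity) hT fun Y hY hYT => hblock N T Y hN hTN hY hYT
    _ = (exp s₁ + 1) ^ 4 * N ^ 4 +
          ρ / (ρ - 1) * C * (N ^ 4 + N ^ 2 * T * (T / N) ^ κ) := by
        rw [intervalIntegral.integral_const, smul_eq_mul]
        ring
    _ ≤ ((exp s₁ + 1) ^ 4 + ρ / (ρ - 1) * C) * (N ^ 4 + N ^ 2 * T * (T / N) ^ κ) := by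
        rw [add_mul]
        gcongr
        exact le_add_of_nonneg_right hP

end SmoothSum

/-! ### From the fourth moment to the count -/

section Fejer

lemma integral_one_sub_mul_cos (θ : ℝ) (hθ : θ ≠ 0) :
    ∫ s in (0 : ℝ)..1, (1 - s) * cos (s * θ) = (1 - cos θ) / θ ^ 2 := by
  have hderiv (s : ℝ) : HasDerivAt (fun s => (1 - s) * (sin (s * θ) / θ) - cos (s * θ) / θ ^ 2)
      ((1 - s) * cos (s * θ)) s := by
    have hlin : HasDerivAt (fun s : ℝ => s * θ) θ s := hasDerivAt_mul_const θ
    refine ((((hasDerivAt_id' s).const_sub 1).mul (hlin.sin.div_const θ)).sub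
      (hlin.cos.div_const (θ ^ 2))).congr_deriv ?_
    field_simp
    ring
  rw [intervalIntegral.integral_eq_sub_of_hasDerivAt (fun s _ => hderiv s)
    (Continuous.intervalIntegrable (by fun_prop) _ _)]
  simp only [sub_self, zero_mul, one_mul, sin_zero, cos_zero, zero_div, mul_zero]
  ring

lemma integral_one_sub_mul_cos_nonneg (θ : ℝ) :
    0 ≤ ∫ s in (0 : ℝ)..1, (1 - s) * cos (s * θ) := by
  rcases eq_or_ne θ 0 with rfl | hθ
  · refine intervalIntegral.integral_nonneg zero_le_one fun s hs => ?_
    rw [mul_zero, cos_zero, mul_one]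
    exact sub_nonneg.2 hs.2
  · rw [integral_one_sub_mul_cos θ hθ]
    exact div_nonneg (sub_nonneg.2 (cos_le_one θ)) (sq_nonneg θ)

lemma quarter_le_integral_one_sub_mul_cos {θ : ℝ} (hθ : |θ| ≤ 1) :
    1 / 4 ≤ ∫ s in (0 : ℝ)..1, (1 - s) * cos (s * θ) := by
  calc (1 : ℝ) / 4 = ∫ s in (0 : ℝ)..1, (1 - s) * (1 / 2) := by
        rw [intervalIntegral.integral_mul_const, intervalIntegral.integral_sub
          intervalIntegrable_const intervalIntegral.intervalIntegrable_id, integral_id,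
          intervalIntegral.integral_const]
        norm_num
    _ ≤ ∫ s in (0 : ℝ)..1, (1 - s) * cos (s * θ) := by
        refine intervalIntegral.integral_mono_on zero_le_one
          (Continuous.intervalIntegrable (by fun_prop) _ _)
          (Continuous.intervalIntegrable (by fun_prop) _ _) fun s hs => ?_
        refine mul_le_mul_of_nonneg_left ?_ (sub_nonneg.2 hs.2)
        have hsq : (s * θ) ^ 2 ≤ 1 := by
          rw [sq_le_one_iff_abs_le_one, abs_mul, abs_of_nonneg hs.1]
          exact mul_le_one₀ hs.2 (abs_nonneg θ) hθ
        linarith [one_sub_sq_div_two_le_cos (x := s * θ)]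

variable {ι : Type*} {A A' : Finset ι} {w : ι → ℝ}

lemma quadCoeff_ofReal (w : ι → ℝ) (q : ι × ι × ι × ι) :
    quadCoeff (fun n => (w n : ℂ)) q =
      ((w q.1 * w q.2.1 * (w q.2.2.1 * w q.2.2.2) : ℝ) : ℂ) := by
  simp only [quadCoeff, Complex.conj_ofReal, Complex.ofReal_mul]

lemma integral_fejer_norm_sum_pow_four (A : Finset ι) (w t : ι → ℝ) (T : ℝ) :
    ∫ s in (0 : ℝ)..1, (1 - s) * ‖∑ n ∈ A, (w n : ℂ) * osc (s * T * t n)‖ ^ 4 =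
      ∑ q ∈ quads A, w q.1 * w q.2.1 * (w q.2.2.1 * w q.2.2.2) *
        ∫ s in (0 : ℝ)..1, (1 - s) * cos (s * (T * quadGap t q)) := by
  simp_rw [← intervalIntegral.integral_const_mul]
  rw [← intervalIntegral.integral_finsetSum
    (fun q _ => Continuous.intervalIntegrable (by fun_prop) _ _)]
  refine intervalIntegral.integral_congr fun s _ => ?_
  have hre := congrArg Complex.re (norm_sum_mul_osc_pow_four A (fun n => (w n : ℂ)) t (s * T))
  rw [Complex.ofReal_re, Complex.re_sum] at hre
  simp only [hre, Finset.mul_sum]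
  refine Finset.sum_congr rfl fun q _ => ?_
  rw [quadCoeff_ofReal, Complex.re_ofReal_mul, osc, Complex.exp_ofReal_mul_I_re, mul_assoc s T]
  ring

lemma integral_fejer_le {g : ℝ → ℝ} (hg : Continuous g) (hg0 : ∀ y, 0 ≤ g y) {T : ℝ}
    (hT : 0 < T) :
    ∫ s in (0 : ℝ)..1, (1 - s) * g (s * T) ≤ 1 / T * ∫ y in (0 : ℝ)..T, g y := by
  have hscale := intervalIntegral.integral_comp_mul_right (a := 0) (b := 1) g hT.ne'
  rw [zero_mul, one_mul, smul_eq_mul, ← one_div] at hscale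
  rw [← hscale]
  exact intervalIntegral.integral_mono_on zero_le_one
    (Continuous.intervalIntegrable (by fun_prop) _ _)
    (Continuous.intervalIntegrable (by fun_prop) _ _)
    fun s hs => mul_le_of_le_one_left (hg0 _) (sub_le_self 1 hs.1)

/- The Fejér kernel `1 - s` has a nonnegative cosine transform, so dropping the quadruples with a
large gap only decreases the weighted moment. -/
lemma card_filter_quadGap_lt_le_integral (t : ι → ℝ) (hw0 : ∀ n, 0 ≤ w n) (hA : A' ⊆ A)
    (hw1 : ∀ n ∈ A', w n = 1) {T : ℝ} (hT : 0 < T) :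
    (((quads A').filter fun q => |quadGap t q| < 1 / T).card : ℝ) ≤
      4 * (1 / T) * ∫ y in (0 : ℝ)..T, ‖∑ n ∈ A, (w n : ℂ) * osc (y * t n)‖ ^ 4 := by
  have hsub : (quads A').filter (fun q => |quadGap t q| < 1 / T) ⊆ quads A := fun q hq => by
    obtain ⟨h₁, h₂, h₃, h₄⟩ := mem_quads.1 (Finset.mem_filter.1 hq).1
    exact mem_quads.2 ⟨hA h₁, hA h₂, hA h₃, hA h₄⟩
  have hterm : ∀ q ∈ (quads A').filter (fun q => |quadGap t q| < 1 / T),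
      1 / 4 ≤ w q.1 * w q.2.1 * (w q.2.2.1 * w q.2.2.2) *
        ∫ s in (0 : ℝ)..1, (1 - s) * cos (s * (T * quadGap t q)) := fun q hq => by
    obtain ⟨hq, hgap⟩ := Finset.mem_filter.1 hq
    obtain ⟨h₁, h₂, h₃, h₄⟩ := mem_quads.1 hq
    rw [hw1 _ h₁, hw1 _ h₂, hw1 _ h₃, hw1 _ h₄, mul_one, mul_one, one_mul]
    refine quarter_le_integral_one_sub_mul_cos ?_
    rw [abs_mul, abs_of_pos hT]
    exact ((lt_div_iff₀' hT).1 hgap).le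
  have hlow : (((quads A').filter fun q => |quadGap t q| < 1 / T).card : ℝ) * (1 / 4) ≤
      ∫ s in (0 : ℝ)..1, (1 - s) * ‖∑ n ∈ A, (w n : ℂ) * osc (s * T * t n)‖ ^ 4 := by
    rw [integral_fejer_norm_sum_pow_four, ← nsmul_eq_mul]
    refine (Finset.card_nsmul_le_sum _ _ _ hterm).trans
      (Finset.sum_le_sum_of_subset_of_nonneg hsub fun q _ _ => mul_nonneg ?_
        (integral_one_sub_mul_cos_nonneg _))
    exact mul_nonneg (mul_nonneg (hw0 _) (hw0 _)) (mul_nonneg (hw0 _) (hw0 _))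
  have hup := integral_fejer_le (g := fun y => ‖∑ n ∈ A, (w n : ℂ) * osc (y * t n)‖ ^ 4)
    (by fun_prop) (fun y => by positivity) hT
  linarith

end Fejer

lemma exists_isWeight_eq_one {a b : ℝ} (ha : 0 < a) (hab : a < b) :
    ∃ (ω : ℝ → ℝ) (s₀ s₁ : ℝ), IsWeight ω s₀ s₁ ∧ (∀ x, ω x ∈ Set.Icc 0 1) ∧
      (∀ x ∈ Set.Icc a b, ω x = 1) ∧ b ≤ exp s₁ := by
  have hb : 0 < b := ha.trans hab
  let f : ContDiffBump ((a + b) / 2) :=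
    { rIn := (b - a) / 2
      rOut := b / 2
      rIn_pos := by linarith
      rIn_lt_rOut := by linarith }
  have hIn : f.rIn = (b - a) / 2 := rfl
  have hOut : f.rOut = b / 2 := rfl
  have hexp₀ : exp (log (a / 8)) = a / 8 := exp_log (by positivity)
  have hexp₁ : exp (log (2 * b)) = 2 * b := exp_log (by positivity)
  refine ⟨f, log (a / 8), log (2 * b),
    ⟨f.contDiff, log_le_log (by positivity) (by linarith), fun x hx => ?_⟩,
    fun x => ⟨f.nonneg, f.le_one⟩, fun x hx => f.one_of_mem_closedBall ?_, ?_⟩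
  · rw [f.tsupport_eq, Real.closedBall_eq_Icc, hOut] at hx
    rw [hexp₀, hexp₁]
    constructor <;> linarith [hx.1, hx.2]
  · rw [Real.closedBall_eq_Icc, hIn]
    constructor <;> linarith [hx.1, hx.2]
  · rw [hexp₁]
    linarith

lemma quadCount_le_integral_smoothSum {ω : ℝ → ℝ} {a b s₁ : ℝ} (hω0 : ∀ x, 0 ≤ ω x)
    (hω1 : ∀ x ∈ Set.Icc a b, ω x = 1) (hb : 0 < b) (hbs : b ≤ exp s₁) (α : ℝ) {N T : ℝ}
    (hN : 0 < N) (hT : 0 < T) :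
    (quadCount α a b N (1 / T) : ℝ) ≤
      4 * (1 / T) * ∫ y in (0 : ℝ)..T, ‖smoothSum ω α s₁ N y‖ ^ 4 := by
  have hmem {n : ℕ} (hn : n ∈ Finset.Icc ⌈a * N⌉₊ ⌊b * N⌋₊) : a * N ≤ n ∧ (n : ℝ) ≤ b * N := by
    rw [Finset.mem_Icc, Nat.ceil_le, Nat.le_floor_iff (by positivity)] at hn
    exact hn
  refine card_filter_quadGap_lt_le_integral _ (fun n => hω0 _) (fun n hn => ?_) (fun n hn => ?_) hT
  · refine Finset.mem_range.2 (Nat.lt_succ_of_le (Nat.le_floor ((hmem hn).2.trans ?_)))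
    gcongr
  · exact hω1 _ ⟨(le_div_iff₀ hN).2 (hmem hn).1, (div_le_iff₀ hN).2 (hmem hn).2⟩

/-! ### The bootstrap -/

lemma quadCount_mono (α a b N : ℝ) : Monotone (quadCount α a b N) := fun _ _ h =>
  Finset.card_le_card (Finset.monotone_filter_right _ fun _ _ hq => lt_of_lt_of_le hq h)

lemma quadCount_le_pow_four (α : ℝ) {a b N : ℝ} (δ : ℝ) (ha : 0 < a) (hb : 0 < b) (hN : 0 < N) :
    (quadCount α a b N δ : ℝ) ≤ (b * N) ^ 4 := by
  have hcard : (Finset.Icc ⌈a * N⌉₊ ⌊b * N⌋₊).card ≤ ⌊b * N⌋₊ := by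
    have := Nat.ceil_pos.2 (mul_pos ha hN)
    rw [Nat.card_Icc]
    omega
  calc (quadCount α a b N δ : ℝ) ≤ ((⌊b * N⌋₊ ^ 4 : ℕ) : ℝ) := by
        exact_mod_cast (Finset.card_filter_le _ _).trans
          ((card_quads _).trans_le (Nat.pow_le_pow_left hcard 4))
    _ ≤ (b * N) ^ 4 := by
        push_cast
        gcongr
        exact Nat.floor_le (by positivity)

lemma countBound_two (α : ℝ) : CountBound α 2 := fun a b ha hab => by
  have hb : 0 < b := ha.trans hab
  refine ⟨b ^ 4, by positivity, fun N δ hN hδ => (quadCount_le_pow_four α δ ha hb hN).trans ?_⟩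
  calc (b * N) ^ 4 = b ^ 4 * N ^ (2 : ℝ) * N ^ 2 := by rw [rpow_two]; ring
    _ ≤ b ^ 4 * N ^ (2 : ℝ) * (N ^ 4 * δ + N ^ 2) := by
        gcongr
        exact le_add_of_nonneg_left (by positivity)

lemma CountBound.of_one_le {α η : ℝ} (hη0 : 0 ≤ η) (hη2 : η ≤ 2)
    (h : ∀ a b : ℝ, 0 < a → a < b → ∃ C : ℝ, 0 ≤ C ∧ ∀ N δ : ℝ, 1 ≤ N → 0 < δ → δ ≤ 1 →
      (quadCount α a b N δ : ℝ) ≤ C * N ^ η * (N ^ 4 * δ + N ^ 2)) : CountBound α η := by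
  intro a b ha hab
  have hb : 0 < b := ha.trans hab
  obtain ⟨C, hC, hcount⟩ := h a b ha hab
  refine ⟨b ^ 4 + C, by positivity, fun N δ hN hδ => ?_⟩
  have htrivial (hle : N ^ 4 ≤ N ^ η * (N ^ 4 * δ + N ^ 2)) :
      (quadCount α a b N δ : ℝ) ≤ (b ^ 4 + C) * N ^ η * (N ^ 4 * δ + N ^ 2) :=
    calc (quadCount α a b N δ : ℝ) ≤ (b * N) ^ 4 := quadCount_le_pow_four α δ ha hb hN
      _ = b ^ 4 * N ^ 4 := mul_pow b N 4
      _ ≤ (b ^ 4 + C) * (N ^ η * (N ^ 4 * δ + N ^ 2)) := by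
          gcongr
          exact le_add_of_nonneg_right hC
      _ = (b ^ 4 + C) * N ^ η * (N ^ 4 * δ + N ^ 2) := (mul_assoc _ _ _).symm
  rcases lt_or_ge N 1 with hN1 | hN1
  · refine htrivial ?_
    calc N ^ 4 = N ^ (2 : ℝ) * N ^ 2 := by rw [rpow_two]; ring
      _ ≤ N ^ η * (N ^ 4 * δ + N ^ 2) := by
          have := rpow_le_rpow_of_exponent_ge hN hN1.le hη2
          gcongr
          exact le_add_of_nonneg_left (by positivity)
  rcases le_or_gt δ 1 with hδ1 | hδ1
  · refine (hcount N δ hN1 hδ hδ1).trans ?_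
    gcongr
    exact le_add_of_nonneg_left (by positivity)
  · refine htrivial ?_
    calc N ^ 4 ≤ N ^ 4 * δ + N ^ 2 :=
          (le_mul_of_one_le_right (by positivity) hδ1.le).trans
            (le_add_of_nonneg_right (by positivity))
      _ ≤ N ^ η * (N ^ 4 * δ + N ^ 2) :=
          le_mul_of_one_le_left (by positivity) (one_le_rpow hN1 hη0)

/- The exponent `η = κ / (1 + κ)` balances the loss `(T / N) ^ κ` of the fourth moment over
`[0, T]` against the gain `N ^ 4 / T` at `T = N ^ (2 - η)`. -/
lemma exists_cutoff {κ η N δ : ℝ} (hκ : 0 ≤ κ) (hη : η = κ / (1 + κ)) (hN : 1 ≤ N) (hδ : 0 < δ)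
    (hδ1 : δ ≤ 1) :
    ∃ T : ℝ, 1 ≤ T ∧ T ≤ N ^ 2 ∧ δ ≤ 1 / T ∧ (T / N) ^ κ ≤ N ^ η ∧
      N ^ 4 / T ≤ N ^ η * (N ^ 4 * δ + N ^ 2) := by
  have hN0 : 0 < N := one_pos.trans_le hN
  have hη0 : 0 ≤ η := hη ▸ by positivity
  have hη1 : η ≤ 1 := hη ▸ div_le_one_of_le₀ (by linarith) (by positivity)
  have hηκ : (2 - η - 1) * κ = η := by
    rw [hη]
    field_simp
    ring
  have hNη : 1 ≤ N ^ η := one_le_rpow hN hη0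
  refine ⟨min (1 / δ) (N ^ (2 - η)), le_min ((one_le_div hδ).2 hδ1)
    (one_le_rpow hN (by linarith)), (min_le_right _ _).trans ?_, ?_, ?_, ?_⟩
  · rw [← rpow_two]
    exact rpow_le_rpow_of_exponent_le hN (by linarith)
  · rw [le_one_div hδ (by positivity)]
    exact min_le_left _ _
  · calc (min (1 / δ) (N ^ (2 - η)) / N) ^ κ ≤ (N ^ (2 - η) / N) ^ κ := by
          gcongr
          exact min_le_right _ _
      _ = N ^ η := by rw [← rpow_sub_one hN0.ne', ← rpow_mul hN0.le, hηκ]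
  · rw [mul_add]
    rcases min_choice (1 / δ) (N ^ (2 - η)) with h | h <;> rw [h]
    · calc N ^ 4 / (1 / δ) ≤ N ^ η * (N ^ 4 * δ) := by
            rw [div_div_eq_mul_div, div_one]
            exact le_mul_of_one_le_left (by positivity) hNη
        _ ≤ N ^ η * (N ^ 4 * δ) + N ^ η * N ^ 2 := le_add_of_nonneg_right (by positivity)
    · calc N ^ 4 / N ^ (2 - η) = N ^ η * N ^ 2 := by
            rw [rpow_sub hN0, rpow_two]
            field_simp
        _ ≤ N ^ η * (N ^ 4 * δ) + N ^ η * N ^ 2 := le_add_of_nonneg_left (by positivity)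

lemma CountBound.of_dual {α κ : ℝ} (hα0 : α ≠ 0) (hα1 : α ≠ 1) (hκ0 : 0 ≤ κ)
    (hκ : CountBound (α / (α - 1)) κ) : CountBound α (κ / (1 + κ)) := by
  have hη1 : κ / (1 + κ) ≤ 1 := div_le_one_of_le₀ (by linarith) (by positivity)
  refine CountBound.of_one_le (by positivity) (by linarith) fun a b ha hab => ?_
  obtain ⟨ω, s₀, s₁, hω, hω01, hω1, hbs⟩ := exists_isWeight_eq_one ha hab
  obtain ⟨C, hC, hmoment⟩ := hω.exists_integral_smoothSum_pow_four_le
    (fun x => abs_le.2 ⟨by linarith [(hω01 x).1], (hω01 x).2⟩) hα0 hα1 hκ0 hκ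
  refine ⟨8 * C, by positivity, fun N δ hN hδ hδ1 => ?_⟩
  obtain ⟨T, hT, hTN, hδT, hloss, hgain⟩ := exists_cutoff hκ0 rfl hN hδ hδ1
  have hN0 : 0 < N := one_pos.trans_le hN
  have hT0 : 0 < T := one_pos.trans_le hT
  set η := κ / (1 + κ)
  calc (quadCount α a b N δ : ℝ) ≤ quadCount α a b N (1 / T) := by
        exact_mod_cast quadCount_mono α a b N hδT
    _ ≤ 4 * (1 / T) * ∫ y in (0 : ℝ)..T, ‖smoothSum ω α s₁ N y‖ ^ 4 :=
        quadCount_le_integral_smoothSum (fun x => (hω01 x).1) hω1 (ha.trans hab) hbs α hN0 hT0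
    _ ≤ 4 * (1 / T) * (C * (N ^ 4 + N ^ 2 * T * (T / N) ^ κ)) := by
        gcongr
        exact hmoment N T hN hT hTN
    _ = 4 * C * (N ^ 4 / T + N ^ 2 * (T / N) ^ κ) := by field_simp
    _ ≤ 4 * C * (N ^ η * (N ^ 4 * δ + N ^ 2) + (N ^ 4 * δ + N ^ 2) * N ^ η) := by
        gcongr
        exact le_add_of_nonneg_left (by positivity)
    _ = 8 * C * N ^ η * (N ^ 4 * δ + N ^ 2) := by ring

lemma countBound_two_div {α : ℝ} (hα0 : α ≠ 0) (hα1 : α ≠ 1) (n : ℕ) :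
    CountBound α (2 / (1 + 2 * n)) := by
  induction n generalizing α with
  | zero => simpa using countBound_two α
  | succ n ih =>
    have hα : α - 1 ≠ 0 := sub_ne_zero.2 hα1
    have hdual : α / (α - 1) ≠ 1 := by
      rw [Ne, div_eq_one_iff_eq hα]
      exact (sub_one_lt α).ne'
    have hexp : (2 : ℝ) / (1 + 2 * ((n + 1 : ℕ) : ℝ)) =
        2 / (1 + 2 * (n : ℝ)) / (1 + 2 / (1 + 2 * (n : ℝ))) := by
      push_cast
      field_simp
      ring
    rw [hexp]
    exact CountBound.of_dual hα0 hα1 (by positivity) (ih (div_ne_zero hα0 hα) hdual)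

lemma quadGap_div_rpow {ι : Type*} {t : ι → ℝ} (ht : ∀ n, 0 ≤ t n) (α : ℝ) {N : ℝ} (hN : 0 ≤ N)
    (q : ι × ι × ι × ι) :
    quadGap (fun n => (t n / N) ^ α) q = quadGap (fun n => t n ^ α) q / N ^ α := by
  simp only [quadGap, div_rpow (ht _) hN]
  ring

lemma card_filter_Ioc_le_quadCount (α δ : ℝ) {N : ℕ} (hN : 0 < N) :
    ((quads (Finset.Ioc N (2 * N))).filter fun q =>
      |quadGap (fun n : ℕ => (n : ℝ) ^ α) q| < δ * (N : ℝ) ^ α).card ≤ quadCount α 1 2 N δ := by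
  have hN0 : (0 : ℝ) < N := Nat.cast_pos.2 hN
  have hNα : 0 < (N : ℝ) ^ α := rpow_pos_of_pos hN0 α
  have hsub {n : ℕ} (hn : n ∈ Finset.Ioc N (2 * N)) :
      n ∈ Finset.Icc ⌈(1 : ℝ) * N⌉₊ ⌊(2 : ℝ) * N⌋₊ := by
    obtain ⟨hlow, hup⟩ := Finset.mem_Ioc.1 hn
    refine Finset.mem_Icc.2 ⟨Nat.ceil_le.2 ?_, Nat.le_floor ?_⟩
    · rw [one_mul]
      exact_mod_cast hlow.le
    · exact_mod_cast hup
  refine Finset.card_le_card fun q hq => ?_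
  obtain ⟨hq, hgap⟩ := Finset.mem_filter.1 hq
  obtain ⟨h₁, h₂, h₃, h₄⟩ := mem_quads.1 hq
  refine Finset.mem_filter.2 ⟨mem_quads.2 ⟨hsub h₁, hsub h₂, hsub h₃, hsub h₄⟩, ?_⟩
  rw [quadGap_div_rpow (fun n : ℕ => n.cast_nonneg) α hN0.le, abs_div, abs_of_pos hNα]
  exact (div_lt_iff₀ hNα).2 hgap

theorem robert_sargos_count_general {α : ℝ} (hα0 : α ≠ 0) (hα1 : α ≠ 1) {ε : ℝ} (hε : 0 < ε) :
    ∃ C : ℝ, 0 < C ∧ ∀ (δ : ℝ), 0 < δ → ∀ N : ℕ, 1 ≤ N →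
      ((((Finset.Ioc N (2 * N)) ×ˢ (Finset.Ioc N (2 * N)) ×ˢ
          (Finset.Ioc N (2 * N)) ×ˢ (Finset.Ioc N (2 * N))).filter
        (fun q : ℕ × ℕ × ℕ × ℕ =>
          |(q.1 : ℝ) ^ α + (q.2.1 : ℝ) ^ α - (q.2.2.1 : ℝ) ^ α - (q.2.2.2 : ℝ) ^ α|
            < δ * (N : ℝ) ^ α)).card : ℝ)
        ≤ C * (N : ℝ) ^ ε * ((N : ℝ) ^ 4 * δ + (N : ℝ) ^ 2) := by
  obtain ⟨n, hn⟩ := exists_nat_gt (2 / ε)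
  have hnε : 2 / (1 + 2 * (n : ℝ)) ≤ ε := by
    rw [div_lt_iff₀ hε] at hn
    rw [div_le_iff₀ (by positivity)]
    nlinarith [mul_nonneg n.cast_nonneg hε.le]
  obtain ⟨C, hC, hcount⟩ := countBound_two_div hα0 hα1 n 1 2 one_pos one_lt_two
  refine ⟨C, hC, fun δ hδ N hN => ?_⟩
  have hN1 : (1 : ℝ) ≤ N := Nat.one_le_cast.2 hN
  calc _ ≤ (quadCount α 1 2 N δ : ℝ) := Nat.cast_le.2 (card_filter_Ioc_le_quadCount α δ hN)
    _ ≤ C * (N : ℝ) ^ (2 / (1 + 2 * (n : ℝ))) * ((N : ℝ) ^ 4 * δ + (N : ℝ) ^ 2) :=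
        hcount N δ (one_pos.trans_le hN1) hδ
    _ ≤ C * (N : ℝ) ^ ε * ((N : ℝ) ^ 4 * δ + (N : ℝ) ^ 2) := by gcongr

theorem robert_sargos_count (k : ℕ) (hk : 2 ≤ k) (ε : ℝ) (hε : 0 < ε) :
    ∃ C : ℝ, 0 < C ∧ ∀ (δ : ℝ), 0 < δ → ∀ N : ℕ, 1 ≤ N →
      ((((Finset.Ioc N (2 * N)) ×ˢ (Finset.Ioc N (2 * N)) ×ˢ
          (Finset.Ioc N (2 * N)) ×ˢ (Finset.Ioc N (2 * N))).filter
        (fun q : ℕ × ℕ × ℕ × ℕ =>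
          |(q.1 : ℝ) ^ ((1:ℝ)/k) + (q.2.1 : ℝ) ^ ((1:ℝ)/k)
            - (q.2.2.1 : ℝ) ^ ((1:ℝ)/k) - (q.2.2.2 : ℝ) ^ ((1:ℝ)/k)|
            < δ * (N : ℝ) ^ ((1:ℝ)/k))).card : ℝ)
        ≤ C * (N : ℝ) ^ ε * ((N : ℝ) ^ 4 * δ + (N : ℝ) ^ 2) := by
  have hk1 : (1 : ℝ) < k := by exact_mod_cast hk
  exact robert_sargos_count_general (by positivity)
    ((div_lt_one (one_pos.trans hk1)).2 hk1).ne hε
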